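/- arXiv:1407.1222 — 2 statements merged into one kernel-verified Lean document; each statement's English description precedes it below -/
import Mathlib

section
/- For all real x ≥ 2, the double sum S(x) = Σ_{m ≤ x} Σ_{n ≤ x} τ_{1,2}(m·n) satisfies S(x) = C₁·x² + C₂·x^{3/2} + O(x^{10/7+ε}) for every ε > 0, where C₁ = Π_p (1 − p^{−1})² · Σ_{a,b ≥ 0} τ_{1,2}(p^{a+b}) p^{−(a+b)} (product over all primes p) and C₂ = 2·ζ(1/2) · Π_p (1 − p^{−1})²(1 − p^{−1/2}) · Σ_{a,b ≥ 0} τ_{1,2}(p^{a+b}) p^{−a−b/2}. -/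
open Filter Asymptotics

/-- `τ_{1,2}(n)` is the number of ordered pairs `(a,b)` of positive integers with `a·b² = n`. -/
noncomputable def tau12 (n : ℕ) : ℕ :=
  Nat.card {q : ℕ × ℕ // 0 < q.1 ∧ 0 < q.2 ∧ q.1 * q.2 ^ 2 = n}

/-!
The identity behind the theorem is
`τ_{1,2}(mn) = ∑ μ(def)² μ(e) μ(f) τ_{1,2}(m / (d e² f)) τ_{1,2}(n / (d e f²))`, summed over triples
`(d, e, f)` with `d e² f ∣ m` and `d e f² ∣ n`; at a prime it reduces to an identity between floors
of half-integers. Hence the double sum up to `x` is a weighted sum over the triples of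
`T(x / (d e² f)) T(x / (d e f²))`, where `T(y) = ∑_{n ≤ y} τ_{1,2}(n)`. The hyperbola method, cut
at `a, b ≤ y^{1/3}`, gives `T(y) = ζ(2) y + ζ(1/2) y^{1/2} + O(y^{1/3})`. Multiplying out, the main
terms carry the Dirichlet series `∑ μ(def)² μ(e) μ(f) (d e² f)^{-s} (d e f²)^{-w}` at
`(s, w) = (1, 1), (1, 1/2), (1/2, 1)`, whose Euler products are those of the constants. The errors
`y^{1/3} · z` and `y^{2/3} · z^{2/3}` carry the same series at `(1, 1/3)`, `(1/3, 1)` and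
`(2/3, 2/3)`, where it still converges absolutely, for a total of `O(x^{4/3})`.
-/

/-! ### Arithmetic of `τ_{1,2}` -/

lemma isSquare_mul_iff_of_coprime {m n : ℕ} (h : m.Coprime n) :
    IsSquare (m * n) ↔ IsSquare m ∧ IsSquare n := by
  refine ⟨fun hmn => ?_, fun ⟨hm, hn⟩ => hm.mul hn⟩
  obtain ⟨r, hr⟩ := (isSquare_iff_exists_sq _).1 hmn
  obtain ⟨a, rfl⟩ := exists_eq_pow_of_mul_eq_pow (Nat.isUnit_iff.2 h) hr
  obtain ⟨b, rfl⟩ := exists_eq_pow_of_mul_eq_pow (Nat.isUnit_iff.2 h.symm) (mul_comm _ n ▸ hr)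
  exact ⟨IsSquare.sq a, IsSquare.sq b⟩

lemma isSquare_prime_pow_iff {p : ℕ} (hp : p.Prime) (i : ℕ) : IsSquare (p ^ i) ↔ Even i := by
  refine ⟨fun ⟨r, hr⟩ => ?_, fun h => h.isSquare_pow p⟩
  obtain ⟨j, -, rfl⟩ := (Nat.dvd_prime_pow hp).1 (Dvd.intro r hr.symm)
  exact ⟨j, Nat.pow_right_injective hp.two_le (hr.trans (pow_add p j j).symm)⟩

open Classical in
/-- The indicator function of the positive squares, so that `τ_{1,2}` is its Dirichlet convolution
with `ζ`. -/
noncomputable def squareIndicator : ArithmeticFunction ℕ :=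
  ⟨fun n => if n ≠ 0 ∧ IsSquare n then 1 else 0, by simp⟩

lemma isMultiplicative_squareIndicator : squareIndicator.IsMultiplicative := by
  refine ArithmeticFunction.IsMultiplicative.iff_ne_zero.2 ⟨by simp [squareIndicator], ?_⟩
  intro m n hm hn h
  by_cases h₁ : IsSquare m <;> by_cases h₂ : IsSquare n <;>
    simp [squareIndicator, isSquare_mul_iff_of_coprime h, h₁, h₂, hm, hn]

open ArithmeticFunction.zeta in
lemma tau12_eq_squareIndicator_mul_zeta (n : ℕ) : tau12 n = (squareIndicator * ζ) n := by
  classical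
  simp only [ArithmeticFunction.mul_zeta_apply]
  simp only [squareIndicator, ArithmeticFunction.coe_mk, ← Finset.card_filter]
  rw [tau12, ← Nat.card_eq_finsetCard]
  refine Nat.card_congr (Equiv.ofBijective (fun q => ⟨q.1.2 ^ 2, ?_⟩) ⟨?_, ?_⟩)
  · obtain ⟨⟨a, b⟩, ha, hb, rfl⟩ := q
    simp [ha.ne', hb.ne', IsSquare.sq b]
  · rintro ⟨⟨a, b⟩, ha, hb, rfl⟩ ⟨⟨a', b'⟩, ha', hb', h⟩ hbb'
    obtain rfl : b = b' := by simpa using hbb'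
    simpa [hb.ne', eq_comm] using h
  · rintro ⟨d, hd⟩
    obtain ⟨⟨⟨a, rfl⟩, hn⟩, -, b, rfl⟩ := by simpa using hd
    simp only [mul_eq_zero, not_or] at hn
    exact ⟨⟨(a, b), by simp only; lia, by simp only; lia, by ring⟩, Subtype.ext (sq b)⟩

lemma tau12_mul_of_coprime {m n : ℕ} (h : m.Coprime n) :
    tau12 (m * n) = tau12 m * tau12 n := by
  simp only [tau12_eq_squareIndicator_mul_zeta]
  exact (isMultiplicative_squareIndicator.mul
    ArithmeticFunction.isMultiplicative_zeta).map_mul_of_coprime h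

lemma card_filter_even_range_succ (k : ℕ) :
    {i ∈ Finset.range (k + 1) | Even i}.card = k / 2 + 1 := by
  induction k with
  | zero => rfl
  | succ k ih =>
    rw [Finset.range_add_one, Finset.filter_insert]
    split_ifs with h
    · rw [Finset.card_insert_of_notMem (by simp), ih]
      grind
    · rw [ih]
      grind

lemma tau12_prime_pow {p : ℕ} (hp : p.Prime) (k : ℕ) : tau12 (p ^ k) = k / 2 + 1 := by
  rw [tau12_eq_squareIndicator_mul_zeta, ArithmeticFunction.mul_zeta_apply,
    Nat.sum_divisors_prime_pow hp, ← card_filter_even_range_succ, Finset.card_filter]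
  simp [squareIndicator, isSquare_prime_pow_iff hp, hp.ne_zero]

lemma tau12_one : tau12 1 = 1 := by
  simpa using tau12_prime_pow Nat.prime_two 0

/-! ### The expansion of `τ_{1,2}(mn)` -/

section
variable {R : Type*} [AddCommMonoid R]

lemma sum_divisors_mul_of_coprime {m n : ℕ} (hmn : m.Coprime n) (h : ℕ → R) :
    ∑ d ∈ (m * n).divisors, h d = ∑ a ∈ m.divisors, ∑ b ∈ n.divisors, h (a * b) := by
  rw [Nat.divisors_mul, Finset.mul_def, Finset.sum_image hmn.mul_injOn_divisors,
    Finset.sum_product]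

lemma sum_divisors_prime_pow_mul {p k n : ℕ} (hp : p.Prime) (hk : k ≠ 0) (hn : ¬p ∣ n)
    {h : ℕ → R} (hh : ∀ d, p ^ 2 ∣ d → h d = 0) :
    ∑ d ∈ (p ^ k * n).divisors, h d = ∑ d ∈ n.divisors, (h d + h (p * d)) := by
  obtain ⟨k, rfl⟩ := Nat.exists_eq_add_one_of_ne_zero hk
  have hhigh : ∀ i, ∑ d ∈ n.divisors, h (p ^ (i + 1 + 1) * d) = 0 := fun i =>
    Finset.sum_eq_zero fun d _ => hh _ ⟨p ^ i * d, by ring⟩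
  rw [sum_divisors_mul_of_coprime (((Nat.Prime.coprime_iff_not_dvd hp).2 hn).pow_left _),
    Nat.sum_divisors_prime_pow hp, Finset.sum_range_succ', Finset.sum_range_succ',
    Finset.sum_eq_zero fun i _ => hhigh i, Finset.sum_add_distrib]
  simp [add_comm]

lemma sum_divisors_triple_prime_pow_mul {p k n : ℕ} (hp : p.Prime) (hk : k ≠ 0) (hn : ¬p ∣ n)
    {h : ℕ → ℕ → ℕ → R} (hh : ∀ d e f, p ^ 2 ∣ d * e * f → h d e f = 0) :
    ∑ d ∈ (p ^ k * n).divisors, ∑ e ∈ (p ^ k * n).divisors, ∑ f ∈ (p ^ k * n).divisors, h d e f =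
      ∑ d ∈ n.divisors, ∑ e ∈ n.divisors, ∑ f ∈ n.divisors,
        (h d e f + h (p * d) e f + h d (p * e) f + h d e (p * f)) := by
  have split {g : ℕ → R} (hg : ∀ d, p ^ 2 ∣ d → g d = 0) :=
    sum_divisors_prime_pow_mul hp hk hn hg
  have hd : ∀ d e f, p ^ 2 ∣ d → h d e f = 0 := fun d e f hd =>
    hh d e f ((hd.mul_right e).mul_right f)
  have he : ∀ d e f, p ^ 2 ∣ e → h d e f = 0 := fun d e f he =>
    hh d e f ((he.mul_left d).mul_right f)
  have hf : ∀ d e f, p ^ 2 ∣ f → h d e f = 0 := fun d e f hf => hh d e f (hf.mul_left _)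
  have hde : ∀ d e f, h (p * d) (p * e) f = 0 := fun d e f => hh _ _ _ ⟨d * e * f, by ring⟩
  have hdf : ∀ d e f, h (p * d) e (p * f) = 0 := fun d e f => hh _ _ _ ⟨d * e * f, by ring⟩
  have hef : ∀ d e f, h d (p * e) (p * f) = 0 := fun d e f => hh _ _ _ ⟨d * e * f, by ring⟩
  rw [split fun d h' => Finset.sum_eq_zero fun e _ => Finset.sum_eq_zero fun f _ => hd d e f h']
  refine Finset.sum_congr rfl fun d _ => ?_
  rw [split fun e h' => Finset.sum_eq_zero fun f _ => he d e f h',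
    split fun e h' => Finset.sum_eq_zero fun f _ => he (p * d) e f h', ← Finset.sum_add_distrib]
  refine Finset.sum_congr rfl fun e _ => ?_
  rw [split (hf d e), split (hf d (p * e)), split (hf (p * d) e), split (hf (p * d) (p * e)),
    ← Finset.sum_add_distrib, ← Finset.sum_add_distrib, ← Finset.sum_add_distrib]
  refine Finset.sum_congr rfl fun f _ => ?_
  simp only [hde, hdf, hef, add_zero]
  abel

end

section

open scoped ArithmeticFunction.Moebius

/-- `τ_{1,2}(m / k)`, read as `0` when `k` does not divide `m`. -/
noncomputable def tau12Quot (m k : ℕ) : ℤ := if k ∣ m then (tau12 (m / k) : ℤ) else 0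

/-- The coefficient `μ(def)² μ(e) μ(f)` of the triple `(d, e, f)` in the expansion of
`τ_{1,2}(mn)`. -/
def tripleWeight (q : ℕ × ℕ × ℕ) : ℤ := μ (q.1 * q.2.1 * q.2.2) ^ 2 * μ q.2.1 * μ q.2.2

/-- The modulus `d e² f` by which the triple `(d, e, f)` divides the first variable. -/
def leftModulus (q : ℕ × ℕ × ℕ) : ℕ := q.1 * q.2.1 ^ 2 * q.2.2

/-- The modulus `d e f²` by which the triple `(d, e, f)` divides the second variable. -/
def rightModulus (q : ℕ × ℕ × ℕ) : ℕ := q.1 * q.2.1 * q.2.2 ^ 2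

/-- The term of the triple `(d, e, f)` in the expansion of `τ_{1,2}(mn)`. -/
noncomputable def tripleTerm (m n : ℕ) (q : ℕ × ℕ × ℕ) : ℤ :=
  tripleWeight q * tau12Quot m (leftModulus q) * tau12Quot n (rightModulus q)

-- The factor vanishes for `a < i ≤ 2`, as floor division over `ℤ` gives `-1 / 2 = -2 / 2 = -1`.
lemma tau12Quot_prime_pow_mul {p a m k : ℕ} (i : ℕ) (hi : i ≤ 2) (hp : p.Prime) (hm : ¬p ∣ m)
    (hk : ¬p ∣ k) :
    tau12Quot (p ^ a * m) (p ^ i * k) = (((a : ℤ) - i) / 2 + 1) * tau12Quot m k := by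
  have hpm : p.Coprime m := (Nat.Prime.coprime_iff_not_dvd hp).2 hm
  have hpk : p.Coprime k := (Nat.Prime.coprime_iff_not_dvd hp).2 hk
  have hdvd : p ^ i * k ∣ p ^ a * m ↔ i ≤ a ∧ k ∣ m := by
    refine ⟨fun h => ⟨?_, ?_⟩, fun ⟨hia, hkm⟩ => mul_dvd_mul (pow_dvd_pow p hia) hkm⟩
    · exact (Nat.pow_dvd_pow_iff_le_right hp.one_lt).1
        ((hpm.pow_left i).dvd_of_dvd_mul_right ((Dvd.intro _ rfl).trans h))
    · exact (hpk.symm.pow_right a).dvd_of_dvd_mul_left ((Dvd.intro_left _ rfl).trans h)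
  by_cases hkm : k ∣ m
  · by_cases hia : i ≤ a
    · rw [tau12Quot, tau12Quot, if_pos (hdvd.2 ⟨hia, hkm⟩), if_pos hkm,
        Nat.mul_div_mul_comm (pow_dvd_pow p hia) hkm, Nat.pow_div hia hp.pos,
        tau12_mul_of_coprime ((hpm.coprime_dvd_right (Nat.div_dvd_of_dvd hkm)).pow_left _),
        tau12_prime_pow hp]
      push_cast [hia]
      rfl
    · have hzero : ((a : ℤ) - i) / 2 + 1 = 0 := by lia
      simp [tau12Quot, hdvd, hia, hzero]
  · simp [tau12Quot, hdvd, hkm]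

lemma half_floor_add (a b : ℤ) :
    (a + b) / 2 + 1 =
      (a / 2 + 1) * (b / 2 + 1) + ((a - 1) / 2 + 1) * ((b - 1) / 2 + 1)
        - ((a - 2) / 2 + 1) * ((b - 1) / 2 + 1) - ((a - 1) / 2 + 1) * ((b - 2) / 2 + 1) := by
  have hshift (c : ℤ) : (c - 2) / 2 = c / 2 - 1 := by lia
  have hparity (c : ℤ) : (c - 1) / 2 = c / 2 + c % 2 - 1 := by lia
  rw [hshift, hshift, hparity, hparity]
  rcases Int.emod_two_eq_zero_or_one a with ha | ha <;>
    rcases Int.emod_two_eq_zero_or_one b with hb | hb <;> rw [ha, hb]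
  · rw [show (a + b) / 2 = a / 2 + b / 2 by lia]; ring
  · rw [show (a + b) / 2 = a / 2 + b / 2 by lia]; ring
  · rw [show (a + b) / 2 = a / 2 + b / 2 by lia]; ring
  · rw [show (a + b) / 2 = a / 2 + b / 2 + 1 by lia]; ring

lemma tripleTerm_eq_zero_of_sq_dvd {m n p d e f : ℕ} (hp : p.Prime) (h : p ^ 2 ∣ d * e * f) :
    tripleTerm m n (d, e, f) = 0 := by
  have : ¬Squarefree (d * e * f) := fun hs =>
    hp.not_isUnit (hs p (sq p ▸ h))
  simp [tripleTerm, tripleWeight, ArithmeticFunction.moebius_eq_zero_of_not_squarefree this]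

lemma moebius_prime_mul {p n : ℕ} (hp : p.Prime) (h : ¬p ∣ n) : μ (p * n) = -μ n := by
  rw [ArithmeticFunction.isMultiplicative_moebius.map_mul_of_coprime
    ((Nat.Prime.coprime_iff_not_dvd hp).2 h), ArithmeticFunction.moebius_apply_prime hp,
    neg_one_mul]

lemma tripleTerm_prime_sum {m n p a b d e f : ℕ} (hp : p.Prime) (hm : ¬p ∣ m) (hn : ¬p ∣ n)
    (hd : ¬p ∣ d) (he : ¬p ∣ e) (hf : ¬p ∣ f) :
    tripleTerm (p ^ a * m) (p ^ b * n) (d, e, f) +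
        tripleTerm (p ^ a * m) (p ^ b * n) (p * d, e, f) +
        tripleTerm (p ^ a * m) (p ^ b * n) (d, p * e, f) +
        tripleTerm (p ^ a * m) (p ^ b * n) (d, e, p * f) =
      tau12 (p ^ (a + b)) * tripleTerm m n (d, e, f) := by
  have hdef : ¬p ∣ d * e * f := by simp [hp.dvd_mul, hd, he, hf]
  have hleft : ¬p ∣ d * e ^ 2 * f := by simp [hp.dvd_mul, hp.prime.dvd_pow_iff_dvd, hd, he, hf]
  have hright : ¬p ∣ d * e * f ^ 2 := by simp [hp.dvd_mul, hp.prime.dvd_pow_iff_dvd, hd, he, hf]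
  have hquot₀ {c l k : ℕ} (hl : ¬p ∣ l) (hk : ¬p ∣ k) :
      tau12Quot (p ^ c * l) k = ((c : ℤ) / 2 + 1) * tau12Quot l k := by
    simpa using tau12Quot_prime_pow_mul (a := c) 0 (by norm_num) hp hl hk
  have hquot₁ {c l k : ℕ} (hl : ¬p ∣ l) (hk : ¬p ∣ k) :
      tau12Quot (p ^ c * l) (p * k) = (((c : ℤ) - 1) / 2 + 1) * tau12Quot l k := by
    simpa using tau12Quot_prime_pow_mul (a := c) 1 (by norm_num) hp hl hk
  have hquot₂ {c l k : ℕ} (hl : ¬p ∣ l) (hk : ¬p ∣ k) :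
      tau12Quot (p ^ c * l) (p ^ 2 * k) = (((c : ℤ) - 2) / 2 + 1) * tau12Quot l k := by
    simpa using tau12Quot_prime_pow_mul (a := c) 2 le_rfl hp hl hk
  simp only [tripleTerm, tripleWeight, leftModulus, rightModulus]
  rw [show p * d * e * f = p * (d * e * f) by ring, show d * (p * e) * f = p * (d * e * f) by ring,
    show d * e * (p * f) = p * (d * e * f) by ring, moebius_prime_mul hp hdef,
    moebius_prime_mul hp he, moebius_prime_mul hp hf,
    show p * d * e ^ 2 * f = p * (d * e ^ 2 * f) by ring,
    show p * d * e * f ^ 2 = p * (d * e * f ^ 2) by ring,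
    show d * (p * e) ^ 2 * f = p ^ 2 * (d * e ^ 2 * f) by ring,
    show d * (p * e) * f ^ 2 = p * (d * e * f ^ 2) by ring,
    show d * e ^ 2 * (p * f) = p * (d * e ^ 2 * f) by ring,
    show d * e * (p * f) ^ 2 = p ^ 2 * (d * e * f ^ 2) by ring,
    hquot₀ hm hleft, hquot₁ hm hleft, hquot₂ hm hleft, hquot₀ hn hright, hquot₁ hn hright,
    hquot₂ hn hright, tau12_prime_pow hp]
  push_cast
  rw [half_floor_add]
  ring

lemma exists_prime_pow_mul_pow_mul {m n : ℕ} (hm : m ≠ 0) (hn : n ≠ 0) (hmn : m * n ≠ 1) :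
    ∃ p a b m' n', p.Prime ∧ a + b ≠ 0 ∧ ¬p ∣ m' ∧ ¬p ∣ n' ∧ m = p ^ a * m' ∧ n = p ^ b * n' := by
  obtain ⟨p, hp, hpmn⟩ := Nat.exists_prime_and_dvd hmn
  obtain ⟨a, m', hm', rfl⟩ := Nat.exists_eq_pow_mul_and_not_dvd hm p hp.ne_one
  obtain ⟨b, n', hn', rfl⟩ := Nat.exists_eq_pow_mul_and_not_dvd hn p hp.ne_one
  refine ⟨p, a, b, m', n', hp, fun hab => ?_, hm', hn', rfl, rfl⟩
  obtain ⟨rfl, rfl⟩ := Nat.add_eq_zero_iff.1 hab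
  simp [hp.dvd_mul, hm', hn'] at hpmn

lemma sum_divisors_tripleTerm {m n : ℕ} (hm : m ≠ 0) (hn : n ≠ 0) :
    ∑ d ∈ (m * n).divisors, ∑ e ∈ (m * n).divisors, ∑ f ∈ (m * n).divisors,
      tripleTerm m n (d, e, f) = tau12 (m * n) := by
  induction hN : m * n using Nat.strong_induction_on generalizing m n with
  | _ N ih =>
  subst hN
  by_cases hmn : m * n = 1
  · obtain ⟨rfl, rfl⟩ := mul_eq_one.1 hmn
    simp [tripleTerm, tripleWeight, leftModulus, rightModulus, tau12Quot, tau12_one]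
  obtain ⟨p, a, b, m, n, hp, hab, hpm, hpn, rfl, rfl⟩ := exists_prime_pow_mul_pow_mul hm hn hmn
  have hm₀ : m ≠ 0 := right_ne_zero_of_mul hm
  have hn₀ : n ≠ 0 := right_ne_zero_of_mul hn
  have hp_mn : ¬p ∣ m * n := by simp [hp.dvd_mul, hpm, hpn]
  have hndvd : ∀ c ∈ (m * n).divisors, ¬p ∣ c := fun c hc h =>
    hp_mn (h.trans (Nat.dvd_of_mem_divisors hc))
  have hlt : m * n < p ^ (a + b) * (m * n) :=
    lt_mul_of_one_lt_left (Nat.pos_of_ne_zero (mul_ne_zero hm₀ hn₀)) (Nat.one_lt_pow hab hp.one_lt)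
  rw [show p ^ a * m * (p ^ b * n) = p ^ (a + b) * (m * n) by ring] at ih ⊢
  rw [sum_divisors_triple_prime_pow_mul hp hab hp_mn
      (h := fun d e f => tripleTerm (p ^ a * m) (p ^ b * n) (d, e, f))
      fun _ _ _ => tripleTerm_eq_zero_of_sq_dvd hp,
    tau12_mul_of_coprime (((Nat.Prime.coprime_iff_not_dvd hp).2 hp_mn).pow_left _), Nat.cast_mul,
    ← ih _ hlt hm₀ hn₀ rfl]
  simp only [Finset.mul_sum]
  exact Finset.sum_congr rfl fun d hd => Finset.sum_congr rfl fun e he =>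
    Finset.sum_congr rfl fun f hf =>
      tripleTerm_prime_sum hp hpm hpn (hndvd d hd) (hndvd e he) (hndvd f hf)

lemma hasSum_tripleTerm {m n : ℕ} (hm : m ≠ 0) (hn : n ≠ 0) :
    HasSum (tripleTerm m n) (tau12 (m * n)) := by
  set D := (m * n).divisors with hD
  have hsupp : ∀ q ∉ D ×ˢ D ×ˢ D, tripleTerm m n q = 0 := by
    rintro ⟨d, e, f⟩ hq
    by_contra hne
    have hleft : d * e ^ 2 * f ∣ m := by
      by_contra h
      simp [tripleTerm, tau12Quot, leftModulus, h] at hne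
    have hdvd {c : ℕ} (hc : c ∣ d * e ^ 2 * f) : c ∈ D :=
      Nat.mem_divisors.2 ⟨(hc.trans hleft).mul_right n, mul_ne_zero hm hn⟩
    refine hq (Finset.mk_mem_product (hdvd ?_) (Finset.mk_mem_product (hdvd ?_) (hdvd ?_)))
    · exact (dvd_mul_right d _).mul_right f
    · exact ((dvd_pow_self e two_ne_zero).mul_left d).mul_right f
    · exact dvd_mul_left f _
  convert! (hasSum_sum_of_ne_finset_zero hsupp : HasSum (tripleTerm m n) _) using 1
  simp only [Finset.sum_product, hD, sum_divisors_tripleTerm hm hn]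

end

lemma sum_Icc_ite_dvd {R : Type*} [AddCommMonoid R] (N k : ℕ) (f : ℕ → R) :
    ∑ m ∈ Finset.Icc 1 N, (if k ∣ m then f (m / k) else 0) = ∑ n ∈ Finset.Icc 1 (N / k), f n := by
  rcases Nat.eq_zero_or_pos k with rfl | hk
  · simp
  rw [← Finset.sum_filter]
  refine Finset.sum_bij' (fun m _ => m / k) (fun n _ => k * n) ?_ ?_ ?_ ?_ fun _ _ => rfl
  · intro m hm
    obtain ⟨⟨h1m, hmN⟩, hkm⟩ := by simpa using hm
    exact Finset.mem_Icc.2 ⟨Nat.div_pos (Nat.le_of_dvd h1m hkm) hk, Nat.div_le_div_right hmN⟩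
  · intro n hn
    obtain ⟨h1n, hnN⟩ := Finset.mem_Icc.1 hn
    exact Finset.mem_filter.2 ⟨Finset.mem_Icc.2 ⟨Nat.mul_pos hk h1n,
      mul_comm n k ▸ (Nat.le_div_iff_mul_le hk).1 hnN⟩, dvd_mul_right k n⟩
  · exact fun m hm => Nat.mul_div_cancel' (Finset.mem_filter.1 hm).2
  · exact fun n _ => Nat.mul_div_cancel_left n hk

/-- The summatory function `∑_{n ≤ y} τ_{1,2}(n)`. -/
noncomputable def tau12Sum (y : ℝ) : ℝ := ∑ n ∈ Finset.Icc 1 ⌊y⌋₊, (tau12 n : ℝ)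

lemma sum_tau12Quot (x : ℝ) (k : ℕ) :
    ∑ m ∈ Finset.Icc 1 ⌊x⌋₊, (tau12Quot m k : ℝ) = tau12Sum (x / k) := by
  rw [tau12Sum, Nat.floor_div_natCast, ← sum_Icc_ite_dvd]
  exact Finset.sum_congr rfl fun m _ => by simp [tau12Quot]

lemma hasSum_tripleWeight_mul_tau12Sum (x : ℝ) :
    HasSum (fun q => (tripleWeight q : ℝ) * (tau12Sum (x / leftModulus q) *
        tau12Sum (x / rightModulus q)))
      (∑ m ∈ Finset.Icc 1 ⌊x⌋₊, ∑ n ∈ Finset.Icc 1 ⌊x⌋₊, (tau12 (m * n) : ℝ)) := by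
  have hterm : ∀ m ∈ Finset.Icc 1 ⌊x⌋₊, ∀ n ∈ Finset.Icc 1 ⌊x⌋₊,
      HasSum (fun q => (tripleTerm m n q : ℝ)) (tau12 (m * n) : ℝ) := fun m hm n hn => by
    exact_mod_cast (hasSum_tripleTerm (Nat.pos_iff_ne_zero.1 (Finset.mem_Icc.1 hm).1)
      (Nat.pos_iff_ne_zero.1 (Finset.mem_Icc.1 hn).1)).map (Int.castAddHom ℝ)
        continuous_of_discreteTopology
  convert! hasSum_sum fun m hm => hasSum_sum (hterm m hm) using 2 with q
  simp_rw [← sum_tau12Quot, Finset.sum_mul_sum, Finset.mul_sum, tripleTerm, Int.cast_mul, mul_assoc]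

/-! ### Partial sums of the zeta function -/

lemma hasDerivAt_ofReal_cpow (w : ℂ) {t : ℝ} (ht : 0 < t) :
    HasDerivAt (fun y : ℝ => (y : ℂ) ^ w) (w * (t : ℂ) ^ (w - 1)) t := by
  simpa using ((hasDerivAt_id (t : ℂ)).cpow_const (c := w)
    (Complex.ofReal_mem_slitPlane.2 ht)).comp_ofReal

lemma norm_ofReal_cpow_sub_le {w : ℂ} (hw : w.re ≤ 1) {a t : ℝ} (ha : 0 < a) (hat : a ≤ t) :
    ‖(t : ℂ) ^ w - (a : ℂ) ^ w‖ ≤ ‖w‖ * a ^ (w.re - 1) * (t - a) := by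
  refine norm_image_sub_le_of_norm_deriv_le_segment' (f := fun y : ℝ => (y : ℂ) ^ w)
    (fun y hy => (hasDerivAt_ofReal_cpow w (ha.trans_le hy.1)).hasDerivWithinAt)
    (fun y hy => ?_) t (Set.right_mem_Icc.2 hat)
  rw [norm_mul, Complex.norm_cpow_eq_rpow_re_of_pos (ha.trans_le hy.1), Complex.sub_re,
    Complex.one_re]
  gcongr ?_ * ?_
  exact Real.rpow_le_rpow_of_nonpos ha hy.1 (by linarith)

/-- The difference `(1 - s) (n + 1) ^ (-s) - ((n + 2) ^ (1 - s) - (n + 1) ^ (1 - s))` between a term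
of the series of `(1 - s) ζ(s)` and the integral it approximates; summing these differences
continues `ζ` to `0 < re s`. -/
noncomputable def zetaDiff (s : ℂ) (n : ℕ) : ℂ :=
  (1 - s) * ((n + 1 : ℝ) : ℂ) ^ (-s) -
    (((n + 1 + 1 : ℝ) : ℂ) ^ (1 - s) - ((n + 1 : ℝ) : ℂ) ^ (1 - s))

lemma norm_zetaDiff_le {s : ℂ} (hs : 0 < s.re) (n : ℕ) :
    ‖zetaDiff s n‖ ≤ ‖1 - s‖ * ‖s‖ * (n + 1 : ℝ) ^ (-s.re - 1) := by
  obtain ⟨a, ha⟩ : ∃ a : ℝ, a = n + 1 := ⟨_, rfl⟩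
  have ha₀ : 0 < a := by rw [ha]; positivity
  rw [zetaDiff, ← ha, ← norm_neg]
  have hderiv (t : ℝ) (ht : t ∈ Set.Icc a (a + 1)) : HasDerivWithinAt
      (fun y : ℝ => (y : ℂ) ^ (1 - s) - (1 - s) * (a : ℂ) ^ (-s) * y)
      ((1 - s) * ((t : ℂ) ^ (-s) - (a : ℂ) ^ (-s))) (Set.Icc a (a + 1)) t := by
    convert! ((hasDerivAt_ofReal_cpow (1 - s) (ha₀.trans_le ht.1)).sub
      (Complex.ofRealCLM.hasDerivAt.const_mul _)).hasDerivWithinAt using 1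
    simp [mul_sub]
  have hbound (t : ℝ) (ht : t ∈ Set.Ico a (a + 1)) :
      ‖(1 - s) * ((t : ℂ) ^ (-s) - (a : ℂ) ^ (-s))‖ ≤ ‖1 - s‖ * ‖s‖ * a ^ (-s.re - 1) := by
    have h := norm_ofReal_cpow_sub_le (w := -s) (by simp; linarith) ha₀ ht.1
    rw [norm_neg, Complex.neg_re] at h
    rw [norm_mul, mul_assoc]
    gcongr
    exact h.trans (mul_le_of_le_one_right (by positivity) (by linarith [ht.2]))
  convert! norm_image_sub_le_of_norm_deriv_le_segment' hderiv hbound (a + 1)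
    (Set.right_mem_Icc.2 (by linarith)) using 1
  · push_cast
    ring_nf
  · ring

lemma mul_rpow_succ_le_rpow_neg_sub {σ a : ℝ} (hσ : 0 < σ) (ha : 0 < a) :
    σ * (a + 1) ^ (-σ - 1) ≤ a ^ (-σ) - (a + 1) ^ (-σ) := by
  have ha₁ : 0 < a + 1 := by linarith
  have hlog : 1 + σ / (a + 1) ≤ (a / (a + 1)) ^ (-σ) := by
    have hle := Real.log_le_sub_one_of_pos (div_pos ha ha₁)
    have heq : a / (a + 1) - 1 = -(1 / (a + 1)) := by field_simp; ring
    rw [Real.rpow_def_of_pos (div_pos ha ha₁)]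
    refine le_trans ?_ (Real.add_one_le_exp _)
    rw [heq] at hle
    rw [div_eq_mul_one_div]
    nlinarith
  rw [Real.div_rpow ha.le ha₁.le, le_div_iff₀ (by positivity)] at hlog
  rw [Real.rpow_sub_one ha₁.ne']
  linear_combination hlog

lemma tsum_rpow_neg_sub_one_le {σ a : ℝ} (hσ : 0 < σ) (ha : 0 < a) :
    ∑' n : ℕ, (a + n + 1) ^ (-σ - 1) ≤ a ^ (-σ) / σ := by
  refine Real.tsum_le_of_sum_range_le (fun n => by positivity) fun N => ?_
  have hstep : ∀ n ∈ Finset.range N, (a + n + 1) ^ (-σ - 1) ≤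
      ((a + n) ^ (-σ) - (a + (n + 1 : ℕ)) ^ (-σ)) / σ := fun n _ => by
    rw [le_div_iff₀' hσ, Nat.cast_succ, ← add_assoc]
    exact mul_rpow_succ_le_rpow_neg_sub hσ (by positivity)
  refine (Finset.sum_le_sum hstep).trans ?_
  rw [← Finset.sum_div, Finset.sum_range_sub' fun n : ℕ => (a + n) ^ (-σ)]
  gcongr
  simpa using (by positivity : 0 ≤ (a + N) ^ (-σ))

lemma summable_add_one_rpow {σ : ℝ} (hσ : 0 < σ) :
    Summable fun n : ℕ => (n + 1 : ℝ) ^ (-σ - 1) := by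
  exact_mod_cast (summable_nat_add_iff 1).2 (Real.summable_nat_rpow.2 (by linarith : -σ - 1 < -1))

lemma summable_zetaDiff {s : ℂ} (hs : 0 < s.re) : Summable (zetaDiff s) :=
  ((summable_add_one_rpow hs).mul_left _).of_norm_bounded (norm_zetaDiff_le hs)

lemma sum_range_zetaDiff (s : ℂ) (N : ℕ) :
    ∑ n ∈ Finset.range N, zetaDiff s n =
      (1 - s) * ∑ n ∈ Finset.range N, ((n + 1 : ℝ) : ℂ) ^ (-s) -
        ((N + 1 : ℝ) : ℂ) ^ (1 - s) + 1 := by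
  induction N with
  | zero => simp
  | succ N ih =>
    rw [Finset.sum_range_succ, ih, Finset.sum_range_succ, zetaDiff]
    push_cast
    ring

lemma one_sub_riemannZeta₁ {s : ℂ} (hs : s ≠ 1) :
    1 - riemannZeta₁ s = (1 - s) * riemannZeta s + 1 := by
  have : s - 1 ≠ 0 := sub_ne_zero.2 hs
  rw [riemannZeta_eq_inv_sub_mul hs]
  field_simp
  ring

lemma tsum_zetaDiff_of_one_lt_re {s : ℂ} (hs : 1 < s.re) :
    ∑' n, zetaDiff s n = 1 - riemannZeta₁ s := by
  have hpow : Tendsto (fun N : ℕ => ((N + 1 : ℝ) : ℂ) ^ (1 - s)) atTop (nhds 0) := by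
    refine tendsto_zero_iff_norm_tendsto_zero.2 (((tendsto_rpow_neg_atTop
      (sub_pos.2 hs)).comp (tendsto_atTop_add_const_right atTop (1 : ℝ)
        tendsto_natCast_atTop_atTop)).congr fun N => ?_)
    rw [Complex.norm_cpow_eq_rpow_re_of_pos (by positivity)]
    simp
  have hsummable : Summable fun n : ℕ => ((n + 1 : ℝ) : ℂ) ^ (-s) := by
    refine (summable_add_one_rpow (sub_pos.2 hs)).of_norm_bounded fun n => ?_
    rw [Complex.norm_cpow_eq_rpow_re_of_pos (by positivity)]
    simp
  have hzeta : ∑' n : ℕ, ((n + 1 : ℝ) : ℂ) ^ (-s) = riemannZeta s := by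
    simp [zeta_eq_tsum_one_div_nat_add_one_cpow hs, Complex.cpow_neg]
  refine tendsto_nhds_unique (summable_zetaDiff (one_pos.trans hs)).hasSum.tendsto_sum_nat ?_
  rw [one_sub_riemannZeta₁ (by rintro rfl; simp at hs), ← sub_zero ((1 - s) * _), ← hzeta]
  simp only [sum_range_zetaDiff]
  exact ((hsummable.hasSum.tendsto_sum_nat.const_mul _).sub hpow).add_const 1

lemma differentiableOn_tsum_zetaDiff :
    DifferentiableOn ℂ (fun s => ∑' n, zetaDiff s n) {s | 0 < s.re} := by
  intro s₀ hs₀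
  obtain ⟨δ, hδ, hδs₀⟩ := exists_between (show 0 < s₀.re from hs₀)
  set U : Set ℂ := {s | δ < s.re} ∩ Metric.ball s₀ 1
  have hU : IsOpen U := (isOpen_lt continuous_const Complex.continuous_re).inter Metric.isOpen_ball
  have hterm (n : ℕ) : Differentiable ℂ fun s => zetaDiff s n := by
    have h₁ : ((n + 1 : ℝ) : ℂ) ≠ 0 := by exact_mod_cast n.succ_ne_zero
    have h₂ : ((n + 1 + 1 : ℝ) : ℂ) ≠ 0 := by exact_mod_cast (n + 1).succ_ne_zero
    have hsub : Differentiable ℂ fun s : ℂ => 1 - s := by fun_prop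
    exact (hsub.mul (differentiable_neg.const_cpow (Or.inl h₁))).sub
      ((hsub.const_cpow (Or.inl h₂)).sub (hsub.const_cpow (Or.inl h₁)))
  have hbound (n : ℕ) (s : ℂ) (hs : s ∈ U) : ‖zetaDiff s n‖ ≤
      (1 + (1 + ‖s₀‖)) * (1 + ‖s₀‖) * (n + 1 : ℝ) ^ (-δ - 1) := by
    have hnorm : ‖s‖ ≤ 1 + ‖s₀‖ := by
      linarith [norm_le_norm_add_norm_sub' s s₀, mem_ball_iff_norm.1 hs.2]
    have hnorm' : ‖1 - s‖ ≤ 1 + (1 + ‖s₀‖) := by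
      linarith [norm_sub_le 1 s, norm_one (α := ℂ)]
    refine (norm_zetaDiff_le (hδ.trans hs.1) n).trans ?_
    gcongr ?_ * ?_ * ?_
    exact Real.rpow_le_rpow_of_exponent_le (by simp) (by linarith [show δ < s.re from hs.1])
  exact ((Complex.differentiableOn_tsum_of_summable_norm ((summable_add_one_rpow hδ).mul_left _)
    (fun n => (hterm n).differentiableOn) hU hbound).differentiableAt
      (hU.mem_nhds ⟨hδs₀, Metric.mem_ball_self one_pos⟩)).differentiableWithinAt

lemma tsum_zetaDiff {s : ℂ} (hs : 0 < s.re) : ∑' n, zetaDiff s n = 1 - riemannZeta₁ s := by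
  have hopen : IsOpen {s : ℂ | 0 < s.re} := isOpen_lt continuous_const Complex.continuous_re
  refine (differentiableOn_tsum_zetaDiff.analyticOnNhd hopen).eqOn_of_preconnected_of_eventuallyEq
    ((differentiable_riemannZeta₁.const_sub 1).differentiableOn.analyticOnNhd hopen)
    (convex_halfSpace_re_gt 0).isPreconnected (z₀ := 2) (by simp) ?_ hs
  filter_upwards [(isOpen_lt continuous_const Complex.continuous_re).mem_nhds
    (by simp : (1 : ℝ) < (2 : ℂ).re)] with s hs using tsum_zetaDiff_of_one_lt_re hs

lemma norm_tsum_zetaDiff_add_le {s : ℂ} (hs : 0 < s.re) {N : ℕ} (hN : N ≠ 0) :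
    ‖∑' n, zetaDiff s (n + N)‖ ≤ ‖1 - s‖ * (‖s‖ / s.re * (N : ℝ) ^ (-s.re)) := by
  have hN₀ : (0 : ℝ) < N := by positivity
  have hsum : Summable fun n : ℕ => (N + n + 1 : ℝ) ^ (-s.re - 1) := by
    refine ((summable_nat_add_iff N).2 (summable_add_one_rpow hs)).congr fun n => ?_
    rw [Nat.cast_add, add_comm (n : ℝ)]
  refine (tsum_of_norm_bounded (hsum.mul_left (‖1 - s‖ * ‖s‖)).hasSum fun n => ?_).trans ?_
  · simpa [add_comm (N : ℝ)] using norm_zetaDiff_le hs (n + N)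
  · rw [tsum_mul_left, div_mul_eq_mul_div, mul_div_assoc, mul_assoc]
    gcongr
    exact tsum_rpow_neg_sub_one_le hs hN₀

lemma one_sub_mul_sum_cpow_sub_riemannZeta {s : ℂ} (hs : 0 < s.re) (hs₁ : s ≠ 1) (N : ℕ) :
    (1 - s) * (∑ n ∈ Finset.Icc 1 N, (n : ℂ) ^ (-s) - riemannZeta s) =
      ((N + 1 : ℝ) : ℂ) ^ (1 - s) - ∑' n, zetaDiff s (n + N) := by
  have hsplit := (summable_zetaDiff hs).sum_add_tsum_nat_add N
  have hreindex : ∑ n ∈ Finset.range N, ((n + 1 : ℝ) : ℂ) ^ (-s) =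
      ∑ n ∈ Finset.Icc 1 N, (n : ℂ) ^ (-s) := by
    rw [Finset.range_eq_Ico]
    simpa [Finset.Ico_add_one_right_eq_Icc] using
      Finset.sum_Ico_add' (fun n : ℕ => (n : ℂ) ^ (-s)) 0 N 1
  rw [tsum_zetaDiff hs, one_sub_riemannZeta₁ hs₁, sum_range_zetaDiff, hreindex] at hsplit
  linear_combination hsplit

lemma exists_norm_sum_cpow_sub_riemannZeta_le {s : ℂ} (hs : 0 < s.re) (hs₁ : s ≠ 1) :
    ∃ C, ∀ x : ℝ, 1 ≤ x →
      ‖∑ n ∈ Finset.Icc 1 ⌊x⌋₊, (n : ℂ) ^ (-s) - x ^ (1 - s) / (1 - s) - riemannZeta s‖ ≤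
        C * x ^ (-s.re) := by
  refine ⟨1 + ‖s‖ / s.re * 2 ^ s.re, fun x hx => ?_⟩
  have hs_sub : 1 - s ≠ 0 := sub_ne_zero.2 hs₁.symm
  have hx₀ : 0 < x := by linarith
  have hfloor : x / 2 ≤ ⌊x⌋₊ := by linarith [Nat.div_two_lt_floor hx]
  set N := ⌊x⌋₊
  have hN : N ≠ 0 := (Nat.floor_pos.2 hx).ne'
  have hxN : x < N + 1 := Nat.lt_floor_add_one x
  have hpow : ‖((N + 1 : ℝ) : ℂ) ^ (1 - s) - (x : ℂ) ^ (1 - s)‖ ≤ ‖1 - s‖ * x ^ (-s.re) := by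
    refine (norm_ofReal_cpow_sub_le (by simp [hs.le]) hx₀ hxN.le).trans ?_
    refine (mul_le_of_le_one_right (by positivity) (by linarith [Nat.floor_le hx₀.le])).trans_eq ?_
    simp
  have htail : ‖∑' n, zetaDiff s (n + N)‖ ≤ ‖1 - s‖ * (‖s‖ / s.re * (2 ^ s.re * x ^ (-s.re))) := by
    refine (norm_tsum_zetaDiff_add_le hs hN).trans ?_
    gcongr
    calc (N : ℝ) ^ (-s.re) ≤ (x / 2) ^ (-s.re) :=
          Real.rpow_le_rpow_of_nonpos (by positivity) hfloor (by linarith)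
      _ = 2 ^ s.re * x ^ (-s.re) := by
          rw [Real.div_rpow hx₀.le zero_le_two, Real.rpow_neg zero_le_two, div_inv_eq_mul, mul_comm]
  refine le_of_mul_le_mul_left ?_ (norm_pos_iff.2 hs_sub)
  rw [← norm_mul, show (1 - s) * (∑ n ∈ Finset.Icc 1 N, (n : ℂ) ^ (-s) - x ^ (1 - s) / (1 - s) -
      riemannZeta s) = ((N + 1 : ℝ) : ℂ) ^ (1 - s) - (x : ℂ) ^ (1 - s) - ∑' n, zetaDiff s (n + N) by
    linear_combination one_sub_mul_sum_cpow_sub_riemannZeta hs hs₁ N -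
      mul_div_cancel₀ ((x : ℂ) ^ (1 - s)) hs_sub]
  linear_combination (norm_sub_le _ _).trans (add_le_add hpow htail)

/-! ### The summatory function of `τ_{1,2}` -/

lemma card_add_card_mul_card_eq_sum_fibers {α β : Type*} [DecidableEq α] [DecidableEq β]
    {P : Finset (α × β)} {I : Finset α} {J : Finset β} (hIJ : I ×ˢ J ⊆ P)
    (hP : ∀ q ∈ P, q.1 ∈ I ∨ q.2 ∈ J) :
    P.card + I.card * J.card =
      ∑ a ∈ I, {q ∈ P | q.1 = a}.card + ∑ b ∈ J, {q ∈ P | q.2 = b}.card := by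
  have hunion : {q ∈ P | q.1 ∈ I} ∪ {q ∈ P | q.2 ∈ J} = P := by
    rw [← Finset.filter_or]
    exact Finset.filter_true_of_mem hP
  have hinter : {q ∈ P | q.1 ∈ I} ∩ {q ∈ P | q.2 ∈ J} = I ×ˢ J := by
    rw [← Finset.filter_and]
    ext q
    simpa using fun h₁ h₂ => hIJ (Finset.mem_product.2 ⟨h₁, h₂⟩)
  rw [← Finset.card_product, ← hinter]
  nth_rw 1 [← hunion]
  rw [Finset.card_union_add_card_inter,
    Finset.card_eq_sum_card_fiberwise (f := Prod.fst) (t := I) fun q hq => by simp_all,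
    Finset.card_eq_sum_card_fiberwise (f := Prod.snd) (t := J) fun q hq => by simp_all]
  congr 1
  · refine Finset.sum_congr rfl fun a ha => ?_
    exact congr_arg _ (by grind)
  · refine Finset.sum_congr rfl fun b hb => ?_
    exact congr_arg _ (by grind)

/-- The pairs `(a, b)` of positive integers with `a b² ≤ M`, counted by the summatory function of
`τ_{1,2}`. -/
def hyperbolaPairs (M : ℕ) : Finset (ℕ × ℕ) :=
  {q ∈ Finset.Icc 1 M ×ˢ Finset.Icc 1 M | q.1 * q.2 ^ 2 ≤ M}

lemma mem_hyperbolaPairs {M a b : ℕ} :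
    (a, b) ∈ hyperbolaPairs M ↔ 0 < a ∧ 0 < b ∧ a * b ^ 2 ≤ M := by
  simp only [hyperbolaPairs, Finset.mem_filter, Finset.mem_product, Finset.mem_Icc]
  refine ⟨fun h => ⟨h.1.1.1, h.1.2.1, h.2⟩, fun ⟨ha, hb, h⟩ => ⟨⟨⟨ha, ?_⟩, hb, ?_⟩, h⟩⟩
  · exact (Nat.le_mul_of_pos_right a (by positivity)).trans h
  · exact ((Nat.le_self_pow two_ne_zero b).trans (Nat.le_mul_of_pos_left _ ha)).trans h

lemma sum_tau12_eq_card_hyperbolaPairs (M : ℕ) :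
    ∑ n ∈ Finset.Icc 1 M, tau12 n = (hyperbolaPairs M).card := by
  rw [Finset.card_eq_sum_card_fiberwise (f := fun q : ℕ × ℕ => q.1 * q.2 ^ 2)
    (t := Finset.Icc 1 M)]
  · refine Finset.sum_congr rfl fun n hn => Nat.subtype_card _ fun ⟨a, b⟩ => ?_
    have hnM := (Finset.mem_Icc.1 hn).2
    rw [Finset.mem_filter, mem_hyperbolaPairs]
    grind
  · rintro ⟨a, b⟩ hq
    obtain ⟨ha, hb, hab⟩ := mem_hyperbolaPairs.1 hq
    exact Finset.mem_coe.2 (Finset.mem_Icc.2 ⟨Nat.mul_pos ha (by positivity), hab⟩)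

lemma card_hyperbolaPairs_fst {M a : ℕ} (ha : 0 < a) :
    {q ∈ hyperbolaPairs M | q.1 = a}.card = (M / a).sqrt := by
  have hfiber : {q ∈ hyperbolaPairs M | q.1 = a} = {a} ×ˢ Finset.Icc 1 (M / a).sqrt := by
    ext ⟨a', b⟩
    simp only [Finset.mem_filter, mem_hyperbolaPairs, Finset.mem_product, Finset.mem_singleton,
      Finset.mem_Icc, Nat.le_sqrt', Nat.le_div_iff_mul_le ha]
    grind
  simp [hfiber]

lemma card_hyperbolaPairs_snd {M b : ℕ} (hb : 0 < b) :
    {q ∈ hyperbolaPairs M | q.2 = b}.card = M / b ^ 2 := by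
  have hfiber : {q ∈ hyperbolaPairs M | q.2 = b} = Finset.Icc 1 (M / b ^ 2) ×ˢ {b} := by
    ext ⟨a, b'⟩
    simp only [Finset.mem_filter, mem_hyperbolaPairs, Finset.mem_product, Finset.mem_singleton,
      Finset.mem_Icc, Nat.le_div_iff_mul_le (pow_pos hb 2)]
    grind
  simp [hfiber]

lemma sum_tau12_add_sq {M N : ℕ} (hNM : N ^ 3 ≤ M) (hMN : M < (N + 1) ^ 3) :
    ∑ n ∈ Finset.Icc 1 M, tau12 n + N ^ 2 =
      ∑ a ∈ Finset.Icc 1 N, (M / a).sqrt + ∑ b ∈ Finset.Icc 1 N, M / b ^ 2 := by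
  have hbox : Finset.Icc 1 N ×ˢ Finset.Icc 1 N ⊆ hyperbolaPairs M := by
    rintro ⟨a, b⟩ hq
    obtain ⟨⟨ha, haN⟩, hb, hbN⟩ := by simpa using hq
    refine mem_hyperbolaPairs.2 ⟨ha, hb, ?_⟩
    calc a * b ^ 2 ≤ N * N ^ 2 := by gcongr
      _ = N ^ 3 := by ring
      _ ≤ M := hNM
  have hcover : ∀ q ∈ hyperbolaPairs M, q.1 ∈ Finset.Icc 1 N ∨ q.2 ∈ Finset.Icc 1 N := by
    rintro ⟨a, b⟩ hq
    obtain ⟨ha, hb, hab⟩ := mem_hyperbolaPairs.1 hq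
    by_contra! h
    simp only [Finset.mem_Icc, not_and, not_le] at h
    refine (hab.trans_lt hMN).not_ge ?_
    calc (N + 1) ^ 3 = (N + 1) * (N + 1) ^ 2 := by ring
      _ ≤ a * b ^ 2 := by gcongr; exacts [h.1 ha, h.2 hb]
  have hcount := card_add_card_mul_card_eq_sum_fibers hbox hcover
  rw [← sum_tau12_eq_card_hyperbolaPairs, Nat.card_Icc, Nat.add_sub_cancel, ← sq] at hcount
  rw [hcount]
  exact congr_arg₂ _
    (Finset.sum_congr rfl fun a ha => card_hyperbolaPairs_fst (Finset.mem_Icc.1 ha).1)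
    (Finset.sum_congr rfl fun b hb => card_hyperbolaPairs_snd (Finset.mem_Icc.1 hb).1)

lemma exists_norm_sum_rpow_sub_riemannZeta_le {r : ℝ} (hr : 0 < r) (hr₁ : r ≠ 1) :
    ∃ C, ∀ x : ℝ, 1 ≤ x →
      ‖((∑ n ∈ Finset.Icc 1 ⌊x⌋₊, (n : ℝ) ^ (-r) - x ^ (1 - r) / (1 - r) : ℝ) : ℂ) -
        riemannZeta r‖ ≤ C * x ^ (-r) := by
  obtain ⟨C, hC⟩ := exists_norm_sum_cpow_sub_riemannZeta_le (s := r) (by simpa using hr)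
    (by exact_mod_cast hr₁)
  refine ⟨C, fun x hx => ?_⟩
  have hsum : ((∑ n ∈ Finset.Icc 1 ⌊x⌋₊, (n : ℝ) ^ (-r) : ℝ) : ℂ) =
      ∑ n ∈ Finset.Icc 1 ⌊x⌋₊, (n : ℂ) ^ (-(r : ℂ)) := by
    simp [Complex.ofReal_cpow]
  rw [Complex.ofReal_sub, hsum, Complex.ofReal_div, Complex.ofReal_cpow (zero_le_one.trans hx),
    Complex.ofReal_sub, Complex.ofReal_one]
  exact hC x hx

lemma exists_norm_sum_sub_riemannZeta_le {r : ℝ} (hr : 0 < r) (hr₁ : r ≠ 1) :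
    ∃ C, ∀ c : ℝ, 1 ≤ c → ∀ Y : ℝ, 0 ≤ Y → ∀ f : ℕ → ℝ,
      (∀ n ∈ Finset.Icc 1 ⌊c⌋₊, |f n - Y * (n : ℝ) ^ (-r)| ≤ 1) →
      ‖((∑ n ∈ Finset.Icc 1 ⌊c⌋₊, f n - Y * c ^ (1 - r) / (1 - r) : ℝ) : ℂ) -
        Y * riemannZeta r‖ ≤ c + C * (Y * c ^ (-r)) := by
  obtain ⟨C, hC⟩ := exists_norm_sum_rpow_sub_riemannZeta_le hr hr₁
  refine ⟨C, fun c hc Y hY f hf => ?_⟩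
  have hrounding : ‖((∑ n ∈ Finset.Icc 1 ⌊c⌋₊, (f n - Y * (n : ℝ) ^ (-r)) : ℝ) : ℂ)‖ ≤ c := by
    rw [Complex.norm_real, Real.norm_eq_abs]
    refine (Finset.abs_sum_le_sum_abs _ _).trans ((Finset.sum_le_sum hf).trans ?_)
    simpa using Nat.floor_le (zero_le_one.trans hc)
  have hmain := mul_le_mul_of_nonneg_left (hC c hc) hY
  rw [← abs_of_nonneg hY, ← Real.norm_eq_abs, ← Complex.norm_real Y, ← norm_mul] at hmain
  rw [Finset.sum_sub_distrib, ← Finset.mul_sum] at hrounding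
  refine (congr_arg _ ?_).trans_le
    ((norm_add_le _ _).trans (add_le_add hrounding hmain)) |>.trans_eq ?_
  · push_cast
    ring
  · rw [Complex.norm_real, Real.norm_of_nonneg hY]
    ring

lemma abs_sqrt_floor_sub_sqrt_le {z : ℝ} (hz : 0 ≤ z) : |((⌊z⌋₊.sqrt : ℕ) : ℝ) - √z| ≤ 1 := by
  have hle : (⌊z⌋₊.sqrt : ℝ) ≤ √z := Real.le_sqrt_of_sq_le <| by
    exact_mod_cast (Nat.cast_le.2 (Nat.sqrt_le' ⌊z⌋₊)).trans (Nat.floor_le hz)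
  have hlt : √z < ⌊z⌋₊.sqrt + 1 := (Real.sqrt_lt' (by positivity)).2 <| by
    exact_mod_cast (Nat.floor_lt hz).1 (Nat.lt_succ_sqrt' ⌊z⌋₊)
  rw [abs_le]
  constructor <;> linarith

lemma abs_natCast_floor_sub_le {z : ℝ} (hz : 0 ≤ z) : |(⌊z⌋₊ : ℝ) - z| ≤ 1 := by
  rw [abs_le]
  constructor <;> linarith [Nat.floor_le hz, Nat.lt_floor_add_one z]

lemma exists_norm_sum_sqrt_sub_le : ∃ C, ∀ c : ℝ, 1 ≤ c →
    ‖((∑ a ∈ Finset.Icc 1 ⌊c⌋₊, ((⌊c ^ 3⌋₊ / a).sqrt : ℝ) - 2 * c ^ 2 : ℝ) : ℂ) -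
      (c ^ (3 / 2 : ℝ) : ℝ) * riemannZeta (1 / 2)‖ ≤ C * c := by
  obtain ⟨C, hC⟩ := exists_norm_sum_sub_riemannZeta_le (r := 1 / 2) (by norm_num) (by norm_num)
  refine ⟨1 + C, fun c hc => ?_⟩
  have hc₀ : 0 < c := by linarith
  have hrounding : ∀ a ∈ Finset.Icc 1 ⌊c⌋₊,
      |((⌊c ^ 3⌋₊ / a).sqrt : ℝ) - c ^ (3 / 2 : ℝ) * (a : ℝ) ^ (-(1 / 2) : ℝ)| ≤ 1 := by
    intro a _
    rw [← Nat.floor_div_natCast, Real.rpow_neg a.cast_nonneg, ← div_eq_mul_inv,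
      show (3 / 2 : ℝ) = (3 : ℕ) * (1 / 2) by norm_num, Real.rpow_natCast_mul hc₀.le,
      ← Real.div_rpow (by positivity) (by positivity), ← Real.sqrt_eq_rpow]
    exact abs_sqrt_floor_sub_sqrt_le (by positivity)
  have hmain : c ^ (3 / 2 : ℝ) * c ^ (1 - 1 / 2 : ℝ) / (1 - 1 / 2) = 2 * c ^ 2 := by
    rw [← Real.rpow_add hc₀, ← Real.rpow_natCast]
    norm_num
    ring
  have herror : c ^ (3 / 2 : ℝ) * c ^ (-(1 / 2) : ℝ) = c := by
    rw [← Real.rpow_add hc₀]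
    norm_num
  have h := hC c hc (c ^ (3 / 2 : ℝ)) (by positivity) _ hrounding
  rw [hmain, herror] at h
  simpa [add_mul] using h

lemma exists_norm_sum_div_sq_sub_le : ∃ C, ∀ c : ℝ, 1 ≤ c →
    ‖((∑ b ∈ Finset.Icc 1 ⌊c⌋₊, ((⌊c ^ 3⌋₊ / b ^ 2 : ℕ) : ℝ) + c ^ 2 : ℝ) : ℂ) -
      c ^ 3 * riemannZeta 2‖ ≤ C * c := by
  obtain ⟨C, hC⟩ := exists_norm_sum_sub_riemannZeta_le (r := 2) (by norm_num) (by norm_num)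
  refine ⟨1 + C, fun c hc => ?_⟩
  have hc₀ : 0 < c := by linarith
  have hrounding : ∀ b ∈ Finset.Icc 1 ⌊c⌋₊,
      |((⌊c ^ 3⌋₊ / b ^ 2 : ℕ) : ℝ) - c ^ 3 * (b : ℝ) ^ (-2 : ℝ)| ≤ 1 := by
    intro b _
    rw [← Nat.floor_div_natCast, Real.rpow_neg b.cast_nonneg, Real.rpow_two, ← div_eq_mul_inv,
      Nat.cast_pow]
    exact abs_natCast_floor_sub_le (by positivity)
  have hmain : c ^ 3 * c ^ (1 - 2 : ℝ) / (1 - 2) = -c ^ 2 := by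
    rw [show (1 - 2 : ℝ) = -1 by norm_num, Real.rpow_neg_one]
    field_simp
  have herror : c ^ 3 * c ^ (-2 : ℝ) = c := by
    rw [Real.rpow_neg hc₀.le, Real.rpow_two]
    field_simp
  have h := hC c hc (c ^ 3) (by positivity) _ hrounding
  rw [hmain, herror, sub_neg_eq_add] at h
  simpa [add_mul] using h

lemma tau12Sum_pow_three {c : ℝ} (hc : 0 ≤ c) :
    tau12Sum (c ^ 3) + (⌊c⌋₊ : ℝ) ^ 2 =
      ∑ a ∈ Finset.Icc 1 ⌊c⌋₊, ((⌊c ^ 3⌋₊ / a).sqrt : ℝ) +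
        ∑ b ∈ Finset.Icc 1 ⌊c⌋₊, ((⌊c ^ 3⌋₊ / b ^ 2 : ℕ) : ℝ) := by
  unfold tau12Sum
  refine mod_cast sum_tau12_add_sq (Nat.le_floor ?_) ((Nat.floor_lt (by positivity)).2 ?_)
  · push_cast
    gcongr
    exact Nat.floor_le hc
  · push_cast
    gcongr
    exact Nat.lt_floor_add_one c

lemma exists_norm_tau12Sum_pow_three_sub_le : ∃ C, ∀ c : ℝ, 1 ≤ c →
    ‖(tau12Sum (c ^ 3) : ℂ) - riemannZeta 2 * c ^ 3 -
      riemannZeta (1 / 2) * (c ^ (3 / 2 : ℝ) : ℝ)‖ ≤ C * c := by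
  obtain ⟨C₁, hC₁⟩ := exists_norm_sum_sqrt_sub_le
  obtain ⟨C₂, hC₂⟩ := exists_norm_sum_div_sq_sub_le
  refine ⟨C₁ + C₂ + 2, fun c hc => ?_⟩
  have hc₀ : 0 ≤ c := by linarith
  have hsq : ‖((c ^ 2 - (⌊c⌋₊ : ℝ) ^ 2 : ℝ) : ℂ)‖ ≤ 2 * c := by
    rw [Complex.norm_real, Real.norm_eq_abs, abs_le]
    constructor <;> nlinarith [Nat.floor_le hc₀, Nat.lt_floor_add_one c]
  have hsplit := congr_arg Complex.ofReal (tau12Sum_pow_three hc₀)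
  push_cast at hsplit
  refine (congr_arg _ ?_).trans_le
    ((norm_add₃_le).trans (add_le_add_three (hC₁ c hc) (hC₂ c hc) hsq)) |>.trans_eq (by ring)
  push_cast
  linear_combination hsplit

lemma tau12Sum_of_lt_one {y : ℝ} (hy : y < 1) : tau12Sum y = 0 := by
  simp [tau12Sum, Nat.floor_eq_zero.2 hy]

lemma exists_norm_tau12Sum_sub_sub_le : ∃ C, ∀ y : ℝ, 0 < y →
    ‖(tau12Sum y : ℂ) - riemannZeta 2 * y - riemannZeta (1 / 2) * (y ^ (1 / 2 : ℝ) : ℝ)‖ ≤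
      C * y ^ (1 / 3 : ℝ) := by
  obtain ⟨C, hC⟩ := exists_norm_tau12Sum_pow_three_sub_le
  refine ⟨max C (‖riemannZeta 2‖ + ‖riemannZeta (1 / 2)‖), fun y hy => ?_⟩
  rcases lt_or_ge y 1 with hy₁ | hy₁
  · calc _ ≤ ‖riemannZeta 2‖ * y ^ (1 : ℝ) + ‖riemannZeta (1 / 2)‖ * y ^ (1 / 2 : ℝ) := by
          rw [tau12Sum_of_lt_one hy₁, Complex.ofReal_zero, zero_sub, ← neg_add', norm_neg]
          refine (norm_add_le _ _).trans_eq ?_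
          rw [norm_mul, norm_mul, Complex.norm_of_nonneg hy.le,
            Complex.norm_of_nonneg (by positivity), Real.rpow_one]
      _ ≤ ‖riemannZeta 2‖ * y ^ (1 / 3 : ℝ) + ‖riemannZeta (1 / 2)‖ * y ^ (1 / 3 : ℝ) := by
          gcongr ?_ * ?_ + ?_ * ?_ <;>
            exact Real.rpow_le_rpow_of_exponent_ge hy hy₁.le (by norm_num)
      _ ≤ _ := by
          rw [← add_mul]
          gcongr
          exact le_max_right _ _
  · have h := hC (y ^ (1 / 3 : ℝ)) (Real.one_le_rpow hy₁ (by norm_num))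
    rw [← Complex.ofReal_pow, ← Real.rpow_mul_natCast hy.le, ← Real.rpow_mul hy.le] at h
    norm_num at h ⊢
    exact h.trans (by gcongr; exact le_max_left _ _)

lemma exists_norm_tau12Sum_sub_le : ∃ C, ∀ y : ℝ, 0 < y →
    ‖(tau12Sum y : ℂ) - riemannZeta 2 * y‖ ≤ C * y ^ (2 / 3 : ℝ) := by
  obtain ⟨C, hC⟩ := exists_norm_tau12Sum_sub_sub_le
  have hC₀ : 0 ≤ C := by simpa using (norm_nonneg _).trans (hC 1 one_pos)
  refine ⟨max (C + ‖riemannZeta (1 / 2)‖) ‖riemannZeta 2‖, fun y hy => ?_⟩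
  rcases lt_or_ge y 1 with hy₁ | hy₁
  · calc _ = ‖riemannZeta 2‖ * y ^ (1 : ℝ) := by
          rw [tau12Sum_of_lt_one hy₁, Complex.ofReal_zero, zero_sub, norm_neg, norm_mul,
            Complex.norm_of_nonneg hy.le, Real.rpow_one]
      _ ≤ _ := by
          gcongr ?_ * ?_
          · exact le_max_right _ _
          · exact Real.rpow_le_rpow_of_exponent_ge hy hy₁.le (by norm_num)
  · calc _ ≤ C * y ^ (1 / 3 : ℝ) + ‖riemannZeta (1 / 2)‖ * y ^ (1 / 2 : ℝ) := by
          rw [← sub_add_cancel ((tau12Sum y : ℂ) - _) (riemannZeta (1 / 2) * (y ^ (1 / 2 : ℝ) : ℝ))]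
          refine norm_add_le_of_le (hC y hy) (le_of_eq ?_)
          rw [norm_mul, Complex.norm_of_nonneg (by positivity)]
      _ ≤ C * y ^ (2 / 3 : ℝ) + ‖riemannZeta (1 / 2)‖ * y ^ (2 / 3 : ℝ) := by
          gcongr ?_ * ?_ + ?_ * ?_ <;> exact Real.rpow_le_rpow_of_exponent_le hy₁ (by norm_num)
      _ ≤ _ := by
          rw [← add_mul]
          gcongr
          exact le_max_left _ _

/-! ### Euler products -/

section

open scoped ArithmeticFunction.Moebius ArithmeticFunction.zeta

lemma hasProd_one_add_of_map_prime_pow_eq_zero {R : Type*} [NormedCommRing R] [CompleteSpace R]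
    {f : ArithmeticFunction R} (hf : f.IsMultiplicative) (hsum : Summable (‖f ·‖))
    (hzero : ∀ p k : ℕ, p.Prime → 2 ≤ k → f (p ^ k) = 0) :
    HasProd (fun p : Nat.Primes => 1 + f p) (∑' n, f n) := by
  convert! EulerProduct.eulerProduct_hasProd hf.map_one hf.map_mul_of_coprime hsum f.map_zero
    using 2 with p
  rw [tsum_eq_sum (s := Finset.range 2), Finset.sum_range_succ, Finset.sum_range_one, pow_zero,
    pow_one, hf.map_one]
  exact fun k hk => hzero p k p.2 (not_lt.1 fun h => hk (Finset.mem_range.2 h))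

/-- The factorisations `n = d (e f)` as triples `(d, e, f)`. -/
def divisorTriples (n : ℕ) : Finset (ℕ × ℕ × ℕ) :=
  {q ∈ n.divisors ×ˢ n.divisors ×ˢ n.divisors | q.1 * (q.2.1 * q.2.2) = n}

lemma mem_divisorTriples {n : ℕ} (hn : n ≠ 0) {q : ℕ × ℕ × ℕ} :
    q ∈ divisorTriples n ↔ q.1 * (q.2.1 * q.2.2) = n := by
  simp only [divisorTriples, Finset.mem_filter, Finset.mem_product, Nat.mem_divisors]
  refine ⟨fun h => h.2, fun h => ⟨?_, h⟩⟩
  subst h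
  simp_all [dvd_mul_of_dvd_right]

lemma mul_mul_apply_eq_sum_divisorTriples {R : Type*} [Semiring R] (f g h : ArithmeticFunction R)
    {n : ℕ} (hn : n ≠ 0) :
    (f * (g * h)) n = ∑ q ∈ divisorTriples n, f q.1 * (g q.2.1 * h q.2.2) := by
  simp only [ArithmeticFunction.mul_apply, Finset.mul_sum, Finset.sum_sigma']
  refine Finset.sum_bij' (fun x _ => (x.1.1, x.2.1, x.2.2))
    (fun q _ => ⟨(q.1, q.2.1 * q.2.2), (q.2.1, q.2.2)⟩) ?_ ?_ ?_ ?_ ?_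
  case refine_2 =>
    intro q hq
    obtain rfl := (mem_divisorTriples hn).1 hq
    simp_all
  all_goals simp +contextual [mem_divisorTriples hn]

lemma hasSum_pmul_mul_mul {R : Type*} [NormedCommRing R] [CompleteSpace R]
    {F f g h : ArithmeticFunction R} {a : R} (ha : HasSum (fun q : ℕ × ℕ × ℕ =>
      F (q.1 * (q.2.1 * q.2.2)) * (f q.1 * (g q.2.1 * h q.2.2))) a) :
    HasSum (F.pmul (f * (g * h))) a := by
  convert! ha.tsum_fiberwise fun q => q.1 * (q.2.1 * q.2.2) using 1
  funext n
  rcases eq_or_ne n 0 with rfl | hn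
  · rw [ArithmeticFunction.map_zero]
    convert! tsum_zero.symm with q
    rw [show q.1.1 * (q.1.2.1 * q.1.2.2) = 0 from q.2, ArithmeticFunction.map_zero, zero_mul]
  · have hfiber : (fun q : ℕ × ℕ × ℕ => q.1 * (q.2.1 * q.2.2)) ⁻¹' {n} = divisorTriples n :=
      Set.ext fun q => (mem_divisorTriples hn).symm
    rw [hfiber, Finset.tsum_subtype' (divisorTriples n) fun q : ℕ × ℕ × ℕ =>
      F (q.1 * (q.2.1 * q.2.2)) * (f q.1 * (g q.2.1 * h q.2.2)), ArithmeticFunction.pmul_apply,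
      mul_mul_apply_eq_sum_divisorTriples f g h hn, Finset.mul_sum]
    exact Finset.sum_congr rfl fun q hq => by rw [(mem_divisorTriples hn).1 hq]

/-- The arithmetic function `n ↦ n^{-s}`. -/
noncomputable def rpowNeg (s : ℝ) : ArithmeticFunction ℝ :=
  ⟨fun n => if n = 0 then 0 else (n : ℝ) ^ (-s), if_pos rfl⟩

lemma rpowNeg_apply (s : ℝ) {n : ℕ} (hn : n ≠ 0) : rpowNeg s n = (n : ℝ) ^ (-s) := if_neg hn

lemma isMultiplicative_rpowNeg (s : ℝ) : (rpowNeg s).IsMultiplicative :=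
  ArithmeticFunction.IsMultiplicative.iff_ne_zero.2 ⟨by simp [rpowNeg_apply s one_ne_zero],
    fun hm hn _ => by
      rw [rpowNeg_apply s hm, rpowNeg_apply s hn, rpowNeg_apply s (mul_ne_zero hm hn),
        Nat.cast_mul, Real.mul_rpow (Nat.cast_nonneg _) (Nat.cast_nonneg _)]⟩

/-- The term of the triple `(d, e, f)` in the Dirichlet series
`∑ μ(def)² μ(e) μ(f) (de²f)^{-s} (def²)^{-w}` of the expansion of `τ_{1,2}(mn)`. -/
noncomputable def tripleSeriesTerm (s w : ℝ) (q : ℕ × ℕ × ℕ) : ℝ :=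
  tripleWeight q * ((leftModulus q : ℝ) ^ (-s) * (rightModulus q : ℝ) ^ (-w))

lemma abs_tripleWeight_le_one (q : ℕ × ℕ × ℕ) : |(tripleWeight q : ℝ)| ≤ 1 := by
  have h (n : ℕ) : |(μ n : ℝ)| ≤ 1 := mod_cast ArithmeticFunction.abs_moebius_le_one
  rw [tripleWeight, Int.cast_mul, Int.cast_mul, Int.cast_pow, abs_mul, abs_mul, abs_pow]
  exact mul_le_one₀ (mul_le_one₀ (pow_le_one₀ (abs_nonneg _) (h _)) (abs_nonneg _) (h _))
    (abs_nonneg _) (h _)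

lemma ne_zero_of_tripleWeight_ne_zero {d e f : ℕ} (h : tripleWeight (d, e, f) ≠ 0) :
    d ≠ 0 ∧ e ≠ 0 ∧ f ≠ 0 := by
  refine ⟨?_, ?_, ?_⟩ <;> rintro rfl <;> simp [tripleWeight] at h

lemma leftModulus_rpow_mul_rightModulus_rpow (s w : ℝ) {d e f : ℕ} (hd : d ≠ 0) (he : e ≠ 0)
    (hf : f ≠ 0) :
    (leftModulus (d, e, f) : ℝ) ^ (-s) * (rightModulus (d, e, f) : ℝ) ^ (-w) =
      (d : ℝ) ^ (-(s + w)) * ((e : ℝ) ^ (-(2 * s + w)) * (f : ℝ) ^ (-(s + 2 * w))) := by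
  have hd' : (0 : ℝ) < d := by positivity
  have he' : (0 : ℝ) < e := by positivity
  have hf' : (0 : ℝ) < f := by positivity
  simp only [leftModulus, rightModulus, Nat.cast_mul, Nat.cast_pow]
  rw [Real.mul_rpow (by positivity) hf'.le, Real.mul_rpow hd'.le (by positivity),
    Real.mul_rpow (by positivity) (by positivity), Real.mul_rpow hd'.le he'.le,
    ← Real.rpow_natCast_mul he'.le, ← Real.rpow_natCast_mul hf'.le,
    show -(s + w) = -s + -w by ring, show -(2 * s + w) = (2 : ℕ) * -s + -w by push_cast; ring,
    show -(s + 2 * w) = -s + (2 : ℕ) * -w by push_cast; ring,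
    Real.rpow_add hd', Real.rpow_add he', Real.rpow_add hf']
  ring

lemma summable_abs_tripleSeriesTerm {s w : ℝ} (h₁ : 1 < s + w) (h₂ : 1 < 2 * s + w)
    (h₃ : 1 < s + 2 * w) : Summable fun q => |tripleSeriesTerm s w q| := by
  have hrpow {r : ℝ} (hr : 1 < r) : Summable fun n : ℕ => (n : ℝ) ^ (-r) :=
    Real.summable_nat_rpow.2 (by linarith)
  have hprod := (hrpow h₁).mul_of_nonneg ((hrpow h₂).mul_of_nonneg (hrpow h₃)
    (fun n => by positivity) (fun n => by positivity)) (fun n => by positivity)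
    (fun q => mul_nonneg (by positivity) (by positivity))
  refine hprod.of_nonneg_of_le (fun q => abs_nonneg _) fun ⟨d, e, f⟩ => ?_
  rw [tripleSeriesTerm, abs_mul, abs_of_nonneg (a := _ * _) (by positivity)]
  by_cases h : tripleWeight (d, e, f) = 0
  · rw [h, Int.cast_zero, abs_zero, zero_mul]
    positivity
  · obtain ⟨hd, he, hf⟩ := ne_zero_of_tripleWeight_ne_zero h
    rw [leftModulus_rpow_mul_rightModulus_rpow s w hd he hf]
    exact mul_le_of_le_one_left (by positivity) (abs_tripleWeight_le_one _)

lemma tsum_tripleSeriesTerm_comm (s w : ℝ) :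
    ∑' q, tripleSeriesTerm w s q = ∑' q, tripleSeriesTerm s w q := by
  rw [← ((Equiv.refl ℕ).prodCongr (Equiv.prodComm ℕ ℕ)).tsum_eq]
  refine tsum_congr fun ⟨d, e, f⟩ => ?_
  simp only [tripleSeriesTerm, tripleWeight, leftModulus, rightModulus, Equiv.prodCongr_apply,
    Prod.map, Equiv.refl_apply, Equiv.prodComm_apply, Prod.swap]
  rw [mul_right_comm d f e, mul_right_comm d (f ^ 2) e, mul_right_comm d f (e ^ 2)]
  push_cast
  ring

/-- The coefficients of `∑ tripleSeriesTerm s w`, collected according to the product `def`. -/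
noncomputable def tripleCoeff (s w : ℝ) : ArithmeticFunction ℝ :=
  (((μ : ArithmeticFunction ℝ).pmul (μ : ArithmeticFunction ℝ)).pmul (rpowNeg (s + w))).pmul
    ((ζ : ArithmeticFunction ℝ) * ((μ : ArithmeticFunction ℝ).pmul (rpowNeg s) *
      (μ : ArithmeticFunction ℝ).pmul (rpowNeg w)))

lemma isMultiplicative_tripleCoeff (s w : ℝ) : (tripleCoeff s w).IsMultiplicative := by
  have hμ := ArithmeticFunction.isMultiplicative_moebius.intCast (R := ℝ)
  have hζ := ArithmeticFunction.isMultiplicative_zeta.natCast (R := ℝ)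
  exact ((hμ.pmul hμ).pmul (isMultiplicative_rpowNeg _)).pmul
    (hζ.mul ((hμ.pmul (isMultiplicative_rpowNeg s)).mul (hμ.pmul (isMultiplicative_rpowNeg w))))

lemma mul_apply_prime {R : Type*} [Semiring R] (f g : ArithmeticFunction R) {p : ℕ}
    (hp : p.Prime) : (f * g) p = f 1 * g p + f p * g 1 := by
  rw [ArithmeticFunction.mul_apply, Nat.sum_divisorsAntidiagonal fun a b => f a * g b,
    hp.sum_divisors, Nat.div_self hp.pos, Nat.div_one, add_comm]

lemma tripleCoeff_prime (s w : ℝ) {p : ℕ} (hp : p.Prime) :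
    tripleCoeff s w p =
      (p : ℝ) ^ (-(s + w)) * (1 - (p : ℝ) ^ (-s) - (p : ℝ) ^ (-w)) := by
  simp only [tripleCoeff, ArithmeticFunction.pmul_apply, mul_apply_prime _ _ hp,
    ArithmeticFunction.intCoe_apply, ArithmeticFunction.natCoe_apply,
    ArithmeticFunction.zeta_apply_ne hp.ne_zero, ArithmeticFunction.zeta_apply_ne one_ne_zero,
    ArithmeticFunction.moebius_apply_one,
    ArithmeticFunction.moebius_apply_prime hp, rpowNeg_apply _ hp.ne_zero,
    (isMultiplicative_rpowNeg _).map_one, ArithmeticFunction.mul_apply_one]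
  push_cast
  ring

lemma tripleCoeff_prime_pow (s w : ℝ) {p k : ℕ} (hp : p.Prime) (hk : 2 ≤ k) :
    tripleCoeff s w (p ^ k) = 0 := by
  have hμ : μ (p ^ k) = 0 := by
    rw [ArithmeticFunction.moebius_apply_prime_pow hp (by lia), if_neg (by lia)]
  simp [tripleCoeff, hμ]

lemma tripleSeriesTerm_eq (s w : ℝ) (q : ℕ × ℕ × ℕ) :
    tripleSeriesTerm s w q =
      (((μ : ArithmeticFunction ℝ).pmul (μ : ArithmeticFunction ℝ)).pmul (rpowNeg (s + w)))
        (q.1 * (q.2.1 * q.2.2)) * ((ζ : ArithmeticFunction ℝ) q.1 *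
          ((μ : ArithmeticFunction ℝ).pmul (rpowNeg s) q.2.1 *
            (μ : ArithmeticFunction ℝ).pmul (rpowNeg w) q.2.2)) := by
  obtain ⟨d, e, f⟩ := q
  by_cases h : d ≠ 0 ∧ e ≠ 0 ∧ f ≠ 0
  · obtain ⟨hd, he, hf⟩ := h
    have he' : (0 : ℝ) < e := by positivity
    have hf' : (0 : ℝ) < f := by positivity
    rw [tripleSeriesTerm, leftModulus_rpow_mul_rightModulus_rpow s w hd he hf,
      show -(2 * s + w) = -(s + w) + -s by ring, show -(s + 2 * w) = -(s + w) + -w by ring,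
      Real.rpow_add he', Real.rpow_add hf']
    simp only [ArithmeticFunction.pmul_apply, rpowNeg_apply _ (mul_ne_zero hd (mul_ne_zero he hf)),
      rpowNeg_apply _ he, rpowNeg_apply _ hf, tripleWeight, ArithmeticFunction.intCoe_apply,
      ArithmeticFunction.natCoe_apply, ArithmeticFunction.zeta_apply_ne hd, mul_assoc d e f]
    push_cast
    rw [Real.mul_rpow (by positivity) (by positivity), Real.mul_rpow he'.le hf'.le]
    ring
  · have hweight : tripleWeight (d, e, f) = 0 := by
      by_contra hne
      exact h (ne_zero_of_tripleWeight_ne_zero hne)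
    have hdef : d * (e * f) = 0 := by grind
    rw [tripleSeriesTerm, hweight, hdef, ArithmeticFunction.map_zero, Int.cast_zero, zero_mul,
      zero_mul]

lemma hasProd_tsum_tripleSeriesTerm {s w : ℝ} (h₁ : 1 < s + w) (h₂ : 1 < 2 * s + w)
    (h₃ : 1 < s + 2 * w) :
    HasProd (fun p : Nat.Primes =>
        1 + (p : ℝ) ^ (-(s + w)) * (1 - (p : ℝ) ^ (-s) - (p : ℝ) ^ (-w)))
      (∑' q, tripleSeriesTerm s w q) := by
  have hcoeff : HasSum (tripleCoeff s w) (∑' q, tripleSeriesTerm s w q) :=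
    hasSum_pmul_mul_mul (by
      simpa only [← tripleSeriesTerm_eq] using
        (summable_abs_tripleSeriesTerm h₁ h₂ h₃).of_abs.hasSum)
  rw [← hcoeff.tsum_eq]
  convert! hasProd_one_add_of_map_prime_pow_eq_zero (isMultiplicative_tripleCoeff s w)
    hcoeff.summable.norm fun p k hp hk => tripleCoeff_prime_pow s w hp hk using 3 with p
  exact (tripleCoeff_prime s w p.2).symm

end

lemma half_add_one_cast (n : ℕ) : ((n / 2 + 1 : ℕ) : ℂ) = (2 * n + 3 + (-1) ^ n) / 4 := by
  rcases Nat.even_or_odd' n with ⟨k, rfl | rfl⟩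
  · rw [Nat.mul_div_cancel_left k two_pos, pow_mul]
    push_cast
    norm_num
    ring
  · rw [show (2 * k + 1) / 2 = k by lia, pow_succ, pow_mul]
    push_cast
    norm_num
    ring

lemma one_sub_ne_zero_of_norm_lt_one {z : ℂ} (hz : ‖z‖ < 1) : 1 - z ≠ 0 := by
  rintro h
  simp [← sub_eq_zero.1 h] at hz

lemma tsum_tau12_prime_pow_mul {p : ℕ} (hp : p.Prime) {u v : ℂ} (hu : ‖u‖ < 1) (hv : ‖v‖ < 1) :
    ∑' q : ℕ × ℕ, (tau12 (p ^ (q.1 + q.2)) : ℂ) * (u ^ q.1 * v ^ q.2) =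
      (1 + u * v * (1 - u - v)) / ((1 - u) * (1 - u ^ 2) * ((1 - v) * (1 - v ^ 2))) := by
  have hmul {f g : ℕ → ℂ} {a b : ℂ} (hf : HasSum f a) (hg : HasSum g b) :
      HasSum (fun q : ℕ × ℕ => f q.1 * g q.2) (a * b) :=
    hf.mul hg (summable_mul_of_summable_norm hf.summable.norm hg.summable.norm)
  have hgeom {z : ℂ} (hz : ‖z‖ < 1) := hasSum_geometric_of_norm_lt_one hz
  have hcoe {z : ℂ} (hz : ‖z‖ < 1) := hasSum_coe_mul_geometric_of_norm_lt_one hz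
  have hu' : ‖-u‖ < 1 := by rwa [norm_neg]
  have hv' : ‖-v‖ < 1 := by rwa [norm_neg]
  have hsum := ((((hmul (hcoe hu) (hgeom hv)).add (hmul (hgeom hu) (hcoe hv))).mul_left 2).add
    ((hmul (hgeom hu) (hgeom hv)).mul_left 3)).add (hmul (hgeom hu') (hgeom hv')) |>.div_const 4
  convert hsum.tsum_eq using 1
  · refine tsum_congr fun q => ?_
    rw [tau12_prime_pow hp, half_add_one_cast, neg_pow u, neg_pow v, pow_add]
    push_cast
    ring
  · have h₁ := one_sub_ne_zero_of_norm_lt_one hu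
    have h₂ := one_sub_ne_zero_of_norm_lt_one hv
    have h₃ := one_sub_ne_zero_of_norm_lt_one hu'
    have h₄ := one_sub_ne_zero_of_norm_lt_one hv'
    simp only [sub_neg_eq_add] at h₃ h₄ ⊢
    rw [show 1 - u ^ 2 = (1 - u) * (1 + u) by ring, show 1 - v ^ 2 = (1 - v) * (1 + v) by ring]
    field_simp
    ring

lemma norm_prime_cpow_neg_lt_one (p : Nat.Primes) {s : ℝ} (hs : 0 < s) :
    ‖(p : ℂ) ^ (-s : ℂ)‖ < 1 := by
  rw [Complex.norm_natCast_cpow_of_pos p.2.pos]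
  exact Real.rpow_lt_one_of_one_lt_of_neg (mod_cast p.2.one_lt) (by simpa using hs)

lemma hasProd_ofReal_tsum_tripleSeriesTerm {s w : ℝ} (h₁ : 1 < s + w) (h₂ : 1 < 2 * s + w)
    (h₃ : 1 < s + 2 * w) :
    HasProd (fun p : Nat.Primes => 1 + (p : ℂ) ^ (-s : ℂ) * (p : ℂ) ^ (-w : ℂ) *
        (1 - (p : ℂ) ^ (-s : ℂ) - (p : ℂ) ^ (-w : ℂ)))
      ((∑' q, tripleSeriesTerm s w q : ℝ) : ℂ) := by
  convert! (hasProd_tsum_tripleSeriesTerm h₁ h₂ h₃).map Complex.ofRealHom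
    Complex.continuous_ofReal using 2 with p
  have hp : (0 : ℝ) < p := mod_cast p.2.pos
  rw [Function.comp_apply, Complex.ofRealHom_eq_coe, neg_add, Real.rpow_add hp]
  push_cast [Complex.ofReal_cpow hp.le]
  rfl

lemma tprod_mul_tsum_tau12_one_one :
    ∏' p : Nat.Primes, ((1 - ((p : ℕ) : ℂ)⁻¹) ^ 2 *
        ∑' q : ℕ × ℕ, (tau12 ((p : ℕ) ^ (q.1 + q.2)) : ℂ) / ((p : ℕ) : ℂ) ^ (q.1 + q.2)) =
      riemannZeta 2 ^ 2 * (∑' q, tripleSeriesTerm 1 1 q : ℝ) := by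
  have hζ := riemannZeta_eulerProduct_hasProd (s := 2) (by norm_num)
  have hK := hasProd_ofReal_tsum_tripleSeriesTerm (s := 1) (w := 1) (by norm_num) (by norm_num)
    (by norm_num)
  rw [sq, ← ((hζ.mul hζ).mul hK).tprod_eq]
  refine tprod_congr fun p => ?_
  have hu := norm_prime_cpow_neg_lt_one p one_pos
  simp only [Complex.ofReal_one, Complex.cpow_neg, Complex.cpow_one,
    Complex.cpow_ofNat, ← inv_pow] at hu ⊢
  set u := ((p : ℕ) : ℂ)⁻¹
  have hterm (q : ℕ × ℕ) : (tau12 ((p : ℕ) ^ (q.1 + q.2)) : ℂ) / ((p : ℕ) : ℂ) ^ (q.1 + q.2) =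
      (tau12 ((p : ℕ) ^ (q.1 + q.2)) : ℂ) * (u ^ q.1 * u ^ q.2) := by
    rw [div_eq_mul_inv, ← inv_pow, ← pow_add u]
  have hu₁ := one_sub_ne_zero_of_norm_lt_one hu
  have hu₂ : 1 - u ^ 2 ≠ 0 := one_sub_ne_zero_of_norm_lt_one (by
    rw [norm_pow]; exact pow_lt_one₀ (norm_nonneg _) hu two_ne_zero)
  simp_rw [hterm]
  rw [tsum_tau12_prime_pow_mul p.2 hu hu]
  field_simp

lemma tprod_mul_tsum_tau12_one_half :
    ∏' p : Nat.Primes, ((1 - ((p : ℕ) : ℂ)⁻¹) ^ 2 * (1 - ((p : ℕ) : ℂ) ^ (-(1 : ℂ) / 2)) *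
        ∑' q : ℕ × ℕ, (tau12 ((p : ℕ) ^ (q.1 + q.2)) : ℂ) *
          ((p : ℕ) : ℂ) ^ (-(q.1 : ℂ) - (q.2 : ℂ) / 2)) =
      riemannZeta 2 * (∑' q, tripleSeriesTerm 1 (1 / 2) q : ℝ) := by
  have hζ := riemannZeta_eulerProduct_hasProd (s := 2) (by norm_num)
  have hK := hasProd_ofReal_tsum_tripleSeriesTerm (s := 1) (w := 1 / 2) (by norm_num)
    (by norm_num) (by norm_num)
  rw [← (hζ.mul hK).tprod_eq]
  refine tprod_congr fun p => ?_
  have hp : ((p : ℕ) : ℂ) ≠ 0 := mod_cast p.2.ne_zero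
  have hu := norm_prime_cpow_neg_lt_one p one_pos
  have hv := norm_prime_cpow_neg_lt_one p one_half_pos
  have hhalf : -(1 : ℂ) / 2 = -((1 / 2 : ℝ) : ℂ) := by push_cast; ring
  rw [hhalf]
  simp only [Complex.ofReal_one, Complex.cpow_neg _ 1, Complex.cpow_neg _ 2, Complex.cpow_one,
    Complex.cpow_ofNat, ← inv_pow] at hu ⊢
  set u := ((p : ℕ) : ℂ)⁻¹ with hu_def
  set v := ((p : ℕ) : ℂ) ^ (-((1 / 2 : ℝ) : ℂ)) with hv_def
  have hvu : v ^ 2 = u := by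
    rw [hv_def, ← Complex.cpow_nat_mul, hu_def, ← Complex.cpow_neg_one]
    norm_num
  have hterm (q : ℕ × ℕ) : (tau12 ((p : ℕ) ^ (q.1 + q.2)) : ℂ) *
      ((p : ℕ) : ℂ) ^ (-(q.1 : ℂ) - (q.2 : ℂ) / 2) =
      (tau12 ((p : ℕ) ^ (q.1 + q.2)) : ℂ) * (u ^ q.1 * v ^ q.2) := by
    rw [hv_def, hu_def, ← Complex.cpow_neg_one, ← Complex.cpow_nat_mul, ← Complex.cpow_nat_mul,
      ← Complex.cpow_add _ _ hp]
    push_cast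
    ring_nf
  have hu₁ := one_sub_ne_zero_of_norm_lt_one hu
  have hv₁ := one_sub_ne_zero_of_norm_lt_one hv
  have hu₂ : 1 - u ^ 2 ≠ 0 := one_sub_ne_zero_of_norm_lt_one (by
    rw [norm_pow]; exact pow_lt_one₀ (norm_nonneg _) hu two_ne_zero)
  simp_rw [hterm]
  rw [tsum_tau12_prime_pow_mul p.2 hu hv, hvu]
  field_simp

/-! ### The double sum -/

lemma exists_norm_tau12Sum_mul_tau12Sum_sub_le :
    ∃ C D : ℝ, ∀ a b : ℝ, 0 < a → 0 < b →
      ‖(tau12Sum a : ℂ) * tau12Sum b - (riemannZeta 2 ^ 2 * (a * b : ℝ) +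
          riemannZeta 2 * riemannZeta (1 / 2) *
            ((a * b ^ (1 / 2 : ℝ) : ℝ) + (a ^ (1 / 2 : ℝ) * b : ℝ)))‖ ≤
        C * (a * b ^ (1 / 3 : ℝ) + a ^ (1 / 3 : ℝ) * b) +
          D * (a ^ (2 / 3 : ℝ) * b ^ (2 / 3 : ℝ)) := by
  obtain ⟨C, hC⟩ := exists_norm_tau12Sum_sub_sub_le
  obtain ⟨D, hD⟩ := exists_norm_tau12Sum_sub_le
  refine ⟨‖riemannZeta 2‖ * C, D ^ 2, fun a b ha hb => ?_⟩
  have hmain {y z : ℝ} (hy : 0 < y) (hz : 0 < z) :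
      ‖riemannZeta 2 * y * (tau12Sum z - riemannZeta 2 * z -
        riemannZeta (1 / 2) * (z ^ (1 / 2 : ℝ) : ℝ))‖ ≤
          ‖riemannZeta 2‖ * y * (C * z ^ (1 / 3 : ℝ)) := by
    rw [norm_mul, norm_mul, Complex.norm_of_nonneg hy.le]
    exact mul_le_mul_of_nonneg_left (hC z hz) (by positivity)
  have herror : ‖(tau12Sum a - riemannZeta 2 * a) * (tau12Sum b - riemannZeta 2 * b)‖ ≤
      D * a ^ (2 / 3 : ℝ) * (D * b ^ (2 / 3 : ℝ)) := by
    rw [norm_mul]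
    exact mul_le_mul (hD a ha) (hD b hb) (norm_nonneg _) ((norm_nonneg _).trans (hD a ha))
  refine (congr_arg _ ?_).trans_le (((norm_add₃_le).trans
    (add_le_add_three (hmain ha hb) (hmain hb ha) herror)).trans_eq ?_)
  · push_cast
    ring
  · ring

lemma tripleWeight_mul_div_rpow_mul_div_rpow {x : ℝ} (hx : 0 < x) (s w : ℝ) (q : ℕ × ℕ × ℕ) :
    tripleWeight q * ((x / leftModulus q) ^ s * (x / rightModulus q) ^ w) =
      x ^ (s + w) * tripleSeriesTerm s w q := by
  rw [tripleSeriesTerm, Real.div_rpow hx.le (Nat.cast_nonneg _),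
    Real.div_rpow hx.le (Nat.cast_nonneg _), Real.rpow_add hx, Real.rpow_neg (Nat.cast_nonneg _),
    Real.rpow_neg (Nat.cast_nonneg _)]
  ring

lemma abs_tripleWeight_mul_div_rpow_mul_div_rpow {x : ℝ} (hx : 0 < x) (s w : ℝ)
    (q : ℕ × ℕ × ℕ) :
    |(tripleWeight q : ℝ)| * ((x / leftModulus q) ^ s * (x / rightModulus q) ^ w) =
      x ^ (s + w) * |tripleSeriesTerm s w q| := by
  rw [← abs_of_nonneg (a := x ^ (s + w)) (by positivity), ← abs_mul,
    ← tripleWeight_mul_div_rpow_mul_div_rpow hx, abs_mul, abs_of_nonneg (a := _ * _)]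
  positivity

lemma exists_norm_tripleWeight_mul_sub_le :
    ∃ C D : ℝ, ∀ x : ℝ, 0 < x → ∀ q,
      ‖((tripleWeight q * (tau12Sum (x / leftModulus q) * tau12Sum (x / rightModulus q)) : ℝ) : ℂ) -
          (riemannZeta 2 ^ 2 * (x : ℂ) ^ 2 * tripleSeriesTerm 1 1 q +
            riemannZeta 2 * riemannZeta (1 / 2) * (x ^ (3 / 2 : ℝ) : ℝ) *
              (tripleSeriesTerm 1 (1 / 2) q + tripleSeriesTerm (1 / 2) 1 q))‖ ≤
        x ^ (4 / 3 : ℝ) * (C * (|tripleSeriesTerm 1 (1 / 3) q| + |tripleSeriesTerm (1 / 3) 1 q|) +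
          D * |tripleSeriesTerm (2 / 3) (2 / 3) q|) := by
  obtain ⟨C, D, h⟩ := exists_norm_tau12Sum_mul_tau12Sum_sub_le
  refine ⟨C, D, fun x hx ⟨d, e, f⟩ => ?_⟩
  by_cases hq : tripleWeight (d, e, f) = 0
  · simp [tripleSeriesTerm, hq]
  obtain ⟨hd, he, hf⟩ := ne_zero_of_tripleWeight_ne_zero hq
  have hleft : 0 < x / leftModulus (d, e, f) := by unfold leftModulus; positivity
  have hright : 0 < x / rightModulus (d, e, f) := by unfold rightModulus; positivity
  have hbound := mul_le_mul_of_nonneg_left (h _ _ hleft hright)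
    (abs_nonneg (tripleWeight (d, e, f) : ℝ))
  have hmain := tripleWeight_mul_div_rpow_mul_div_rpow hx (q := (d, e, f))
  have herror := abs_tripleWeight_mul_div_rpow_mul_div_rpow hx (q := (d, e, f))
  generalize (d, e, f) = q at *
  have h₁ := hmain 1 1
  have h₂ := hmain 1 (1 / 2)
  have h₃ := hmain (1 / 2) 1
  have h₄ := herror 1 (1 / 3)
  have h₅ := herror (1 / 3) 1
  have h₆ := herror (2 / 3) (2 / 3)
  rw [one_add_one_eq_two, Real.rpow_two] at h₁
  rw [show (1 : ℝ) + 1 / 2 = 3 / 2 by norm_num] at h₂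
  rw [show (1 / 2 : ℝ) + 1 = 3 / 2 by norm_num] at h₃
  rw [show (1 : ℝ) + 1 / 3 = 4 / 3 by norm_num] at h₄
  rw [show (1 / 3 : ℝ) + 1 = 4 / 3 by norm_num] at h₅
  rw [show (2 / 3 : ℝ) + 2 / 3 = 4 / 3 by norm_num] at h₆
  simp only [Real.rpow_one] at h₁ h₂ h₃ h₄ h₅
  rw [← Real.norm_eq_abs, ← Complex.norm_real, ← norm_mul] at hbound
  refine (congr_arg _ ?_).trans_le (hbound.trans_eq ?_)
  · have e₁ := congr_arg Complex.ofReal h₁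
    have e₂ := congr_arg Complex.ofReal h₂
    have e₃ := congr_arg Complex.ofReal h₃
    push_cast at e₁ e₂ e₃ ⊢
    linear_combination riemannZeta 2 ^ 2 * e₁ + riemannZeta 2 * riemannZeta (1 / 2) * (e₂ + e₃)
  · rw [Complex.norm_real, Real.norm_eq_abs]
    linear_combination C * (h₄ + h₅) + D * h₆

lemma exists_norm_sum_tau12_mul_sub_le :
    ∃ B : ℝ, ∀ x : ℝ, 0 < x →
      ‖(∑ m ∈ Finset.Icc 1 ⌊x⌋₊, ∑ n ∈ Finset.Icc 1 ⌊x⌋₊, (tau12 (m * n) : ℂ)) -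
          riemannZeta 2 ^ 2 * (∑' q, tripleSeriesTerm 1 1 q : ℝ) * (x : ℂ) ^ 2 -
          2 * riemannZeta (1 / 2) * (riemannZeta 2 * (∑' q, tripleSeriesTerm 1 (1 / 2) q : ℝ)) *
            (x ^ (3 / 2 : ℝ) : ℝ)‖ ≤ B * x ^ (4 / 3 : ℝ) := by
  obtain ⟨C, D, h⟩ := exists_norm_tripleWeight_mul_sub_le
  have habs {s w : ℝ} := summable_abs_tripleSeriesTerm (s := s) (w := w)
  have hmain {s w : ℝ} (h₁ : 1 < s + w) (h₂ : 1 < 2 * s + w) (h₃ : 1 < s + 2 * w) :=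
    Complex.hasSum_ofReal.2 (habs h₁ h₂ h₃).of_abs.hasSum
  have h₁₁ := hmain (s := 1) (w := 1) (by norm_num) (by norm_num) (by norm_num)
  have h₁₂ := hmain (s := 1) (w := 1 / 2) (by norm_num) (by norm_num) (by norm_num)
  have h₂₁ := hmain (s := 1 / 2) (w := 1) (by norm_num) (by norm_num) (by norm_num)
  rw [tsum_tripleSeriesTerm_comm] at h₂₁
  have h₁₃ := habs (s := 1) (w := 1 / 3) (by norm_num) (by norm_num) (by norm_num)
  have h₃₁ := habs (s := 1 / 3) (w := 1) (by norm_num) (by norm_num) (by norm_num)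
  have h₂₂ := habs (s := 2 / 3) (w := 2 / 3) (by norm_num) (by norm_num) (by norm_num)
  obtain ⟨B, herror⟩ := ((h₁₃.add h₃₁).mul_left C).add (h₂₂.mul_left D)
  refine ⟨B, fun x hx => ?_⟩
  have hsum := (Complex.hasSum_ofReal.2 (hasSum_tripleWeight_mul_tau12Sum x)).sub
    ((h₁₁.mul_left (riemannZeta 2 ^ 2 * (x : ℂ) ^ 2)).add
      ((h₁₂.add h₂₁).mul_left (riemannZeta 2 * riemannZeta (1 / 2) * (x ^ (3 / 2 : ℝ) : ℝ))))
  have hbound := tsum_of_norm_bounded (herror.mul_left (x ^ (4 / 3 : ℝ))) (h x hx)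
  rw [hsum.tsum_eq] at hbound
  refine (congr_arg _ ?_).trans_le (hbound.trans_eq (mul_comm _ _))
  push_cast
  ring

theorem sum_tau12_mul_asymptotic_general :
    (fun x : ℝ =>
        (∑ m ∈ Finset.Icc 1 ⌊x⌋₊, ∑ n ∈ Finset.Icc 1 ⌊x⌋₊, (tau12 (m * n) : ℂ)) -
          (∏' p : Nat.Primes,
              ((1 - ((p : ℕ) : ℂ)⁻¹) ^ 2 *
                ∑' q : ℕ × ℕ,
                  (tau12 ((p : ℕ) ^ (q.1 + q.2)) : ℂ) / ((p : ℕ) : ℂ) ^ (q.1 + q.2))) *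
            (x : ℂ) ^ 2 -
          2 * riemannZeta (1 / 2) *
            (∏' p : Nat.Primes,
              ((1 - ((p : ℕ) : ℂ)⁻¹) ^ 2 * (1 - ((p : ℕ) : ℂ) ^ (-(1 : ℂ) / 2)) *
                ∑' q : ℕ × ℕ,
                  (tau12 ((p : ℕ) ^ (q.1 + q.2)) : ℂ) *
                    ((p : ℕ) : ℂ) ^ (-(q.1 : ℂ) - (q.2 : ℂ) / 2))) *
            ((x ^ ((3 : ℝ) / 2) : ℝ) : ℂ)) =O[atTop]
      fun x : ℝ => x ^ (4 / 3 : ℝ) := by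
  obtain ⟨B, hB⟩ := exists_norm_sum_tau12_mul_sub_le
  rw [tprod_mul_tsum_tau12_one_one, tprod_mul_tsum_tau12_one_half]
  refine IsBigO.of_bound B ?_
  filter_upwards [eventually_gt_atTop (0 : ℝ)] with x hx
  rw [Real.norm_of_nonneg (by positivity : 0 ≤ x ^ (4 / 3 : ℝ))]
  exact hB x hx

/-- Main theorem: `∑_{m,n ≤ x} τ_{1,2}(mn) = C₁ x² + C₂ x^{3/2} + O(x^{10/7+ε})`, where
`C₁ = ∏_p (1-p⁻¹)² ∑_{a,b≥0} τ_{1,2}(p^{a+b}) p^{-(a+b)}` and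
`C₂ = 2 ζ(1/2) ∏_p (1-p⁻¹)²(1-p^{-1/2}) ∑_{a,b≥0} τ_{1,2}(p^{a+b}) p^{-a-b/2}`. -/
theorem sum_tau12_mul_asymptotic :
    ∀ ε > (0 : ℝ),
      (fun x : ℝ =>
          (∑ m ∈ Finset.Icc 1 ⌊x⌋₊, ∑ n ∈ Finset.Icc 1 ⌊x⌋₊, (tau12 (m * n) : ℂ)) -
            (∏' p : Nat.Primes,
                ((1 - ((p : ℕ) : ℂ)⁻¹) ^ 2 *
                  ∑' q : ℕ × ℕ,
                    (tau12 ((p : ℕ) ^ (q.1 + q.2)) : ℂ) / ((p : ℕ) : ℂ) ^ (q.1 + q.2))) *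
              (x : ℂ) ^ 2 -
            2 * riemannZeta (1 / 2) *
              (∏' p : Nat.Primes,
                ((1 - ((p : ℕ) : ℂ)⁻¹) ^ 2 * (1 - ((p : ℕ) : ℂ) ^ (-(1 : ℂ) / 2)) *
                  ∑' q : ℕ × ℕ,
                    (tau12 ((p : ℕ) ^ (q.1 + q.2)) : ℂ) *
                      ((p : ℕ) : ℂ) ^ (-(q.1 : ℂ) - (q.2 : ℂ) / 2))) *
              ((x ^ ((3 : ℝ) / 2) : ℝ) : ℂ)) =O[atTop]
        fun x : ℝ => x ^ (10 / 7 + ε) := by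
  refine fun ε hε => sum_tau12_mul_asymptotic_general.trans (.of_norm_eventuallyLE ?_)
  filter_upwards [eventually_ge_atTop (1 : ℝ)] with x hx
  rw [Real.norm_of_nonneg (by positivity)]
  exact Real.rpow_le_rpow_of_exponent_le hx (by linarith)
end

section
/- Let τ^{(e)} be the multiplicative arithmetic function determined by τ^{(e)}(p^a) = τ(a) for every prime p and a ≥ 1, and τ^{(e)}(1) = 1. Then there exist real constants C₁ and C₂ such that for all real x ≥ 2, Σ_{m ≤ x} Σ_{n ≤ x} τ^{(e)}(m·n) = C₁·x² + C₂·x^{3/2} + O(x^{10/7+ε}) for every ε > 0. -/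
open Filter Asymptotics

/-!
Up to the term in `XY` and terms of total degree at least `3`, the series
`∑ f(p ^ (a + b)) X ^ a Y ^ b` is `1 / ((1 - X)(1 - X²)(1 - Y)(1 - Y²))`. Hence `f(mn)` is the
convolution, in `m` and in `n` separately, of `u(n) = #{b : b² ∣ n}`, whose Dirichlet series is
`ζ(s) ζ(2s)`, with a residual function of two variables. At a prime `p` the local factor of the
double Dirichlet series of the residual is `1` plus terms of size `p ^ (-α - β)`, `p ^ (-3α)` and
`p ^ (-3β)`, so this series converges absolutely at `(α, β)` as soon as `α, β > 1/3` and
`α + β > 1`. Dirichlet's hyperbola method gives `∑_{n ≤ y} u(n) = κ y + ν √y + O(y ^ (1/3))`;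
multiplying the expansions at `y = x/d` and `y = x/e` and summing over the residual yields the main
terms `x²` and `x ^ (3/2)`, while the products with an error term contribute `O(x ^ (1 + θ))` for
every `θ > 1/3`.
-/

namespace ExponentialDivisor

open Finset ArithmeticFunction
open scoped ArithmeticFunction.zeta ArithmeticFunction.Moebius LSeries.notation

section DivisorSums

variable {M : Type*} [AddCommMonoid M]

theorem sum_divisors_mul_of_coprime {m n : ℕ} (hmn : m.Coprime n) (F : ℕ → M) :
    ∑ d ∈ (m * n).divisors, F d = ∑ a ∈ m.divisors, ∑ b ∈ n.divisors, F (a * b) := by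
  have left_eq_gcd : ∀ z ∈ m.divisors ×ˢ n.divisors, z.1 = (z.1 * z.2).gcd m := by
    intro z hz
    simp only [mem_product, Nat.mem_divisors] at hz
    rw [Nat.Coprime.gcd_mul_right_cancel _ (hmn.symm.coprime_dvd_left hz.2.1),
      Nat.gcd_eq_left hz.1.1]
  have right_eq_gcd : ∀ z ∈ m.divisors ×ˢ n.divisors, z.2 = (z.1 * z.2).gcd n := by
    intro z hz
    simp only [mem_product, Nat.mem_divisors] at hz
    rw [Nat.Coprime.gcd_mul_left_cancel _ (hmn.coprime_dvd_left hz.1.1),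
      Nat.gcd_eq_left hz.2.1]
  rw [Nat.divisors_mul, mul_def, sum_image, sum_product]
  intro z hz w hw (hzw : z.1 * z.2 = w.1 * w.2)
  ext
  · rw [left_eq_gcd z hz, left_eq_gcd w hw, hzw]
  · rw [right_eq_gcd z hz, right_eq_gcd w hw, hzw]

theorem sum_divisorsAntidiagonal_mul_of_coprime {m n : ℕ} (hmn : m.Coprime n) (F : ℕ → ℕ → M) :
    ∑ z ∈ (m * n).divisorsAntidiagonal, F z.1 z.2 =
      ∑ x ∈ m.divisorsAntidiagonal, ∑ y ∈ n.divisorsAntidiagonal, F (x.1 * y.1) (x.2 * y.2) := by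
  rw [Nat.sum_divisorsAntidiagonal, sum_divisors_mul_of_coprime hmn,
    Nat.sum_divisorsAntidiagonal fun i j ↦ ∑ y ∈ n.divisorsAntidiagonal, F (i * y.1) (j * y.2)]
  refine sum_congr rfl fun a ha ↦ ?_
  rw [Nat.sum_divisorsAntidiagonal fun i j ↦ F (a * i) (m / a * j)]
  refine sum_congr rfl fun b hb ↦ ?_
  rw [Nat.mul_div_mul_comm (Nat.dvd_of_mem_divisors ha) (Nat.dvd_of_mem_divisors hb)]

theorem sum_divisorsAntidiagonal_prime_pow {p : ℕ} (hp : p.Prime) (k : ℕ) (F : ℕ → ℕ → M) :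
    ∑ z ∈ (p ^ k).divisorsAntidiagonal, F z.1 z.2 =
      ∑ i ∈ antidiagonal k, F (p ^ i.1) (p ^ i.2) := by
  rw [Nat.sum_divisorsAntidiagonal, Nat.divisors_prime_pow hp, sum_map,
    Nat.sum_antidiagonal_eq_sum_range_succ fun i j ↦ F (p ^ i) (p ^ j)]
  refine sum_congr rfl fun i hi ↦ ?_
  rw [Function.Embedding.coeFn_mk, Nat.pow_div (mem_range_succ_iff.mp hi) hp.pos]

end DivisorSums

theorem sum_Ioc_eq_sum_convolution_mul {R : Type*} [CommSemiring R] {u v : ArithmeticFunction R}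
    (huv : u * v = 1) (g : ℕ → R) (N : ℕ) :
    ∑ m ∈ Ioc 0 N, g m = ∑ d ∈ Ioc 0 N, (⇑v ⍟ g) d * ∑ i ∈ Ioc 0 (N / d), u i := by
  have hconv : ⇑v ⍟ g = ⇑(v * toArithmeticFunction g) := by
    rw [LSeries.convolution, toArithmeticFunction_eq_self]
  rw [hconv, ← sum_Ioc_mul_eq_sum_sum, mul_right_comm, mul_comm v u, huv, one_mul]
  refine sum_congr rfl fun m hm ↦ ?_
  simp [toArithmeticFunction, (mem_Ioc.mp hm).1.ne']

section SquareLift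

variable {R : Type*}

/-- The arithmetic function supported on squares with `n ^ 2 ↦ f n`; on Dirichlet series it is the
substitution `F(s) ↦ F(2s)`. -/
def squareLift [Zero R] (f : ArithmeticFunction R) : ArithmeticFunction R :=
  ⟨fun n ↦ if IsSquare n then f n.sqrt else 0, by simp⟩

theorem squareLift_sq [Zero R] (f : ArithmeticFunction R) (n : ℕ) :
    squareLift f (n ^ 2) = f n := by
  simp [squareLift, Nat.sqrt_eq', IsSquare.sq]

theorem squareLift_of_not_isSquare [Zero R] (f : ArithmeticFunction R) {n : ℕ}
    (hn : ¬IsSquare n) : squareLift f n = 0 := by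
  simp [squareLift, hn]

theorem squareLift_one [Zero R] [One R] : squareLift (1 : ArithmeticFunction R) = 1 := by
  ext n
  by_cases hn : IsSquare n
  · obtain ⟨m, rfl⟩ := (isSquare_iff_exists_sq n).mp hn
    simp [squareLift_sq, one_apply]
  · rw [squareLift_of_not_isSquare _ hn, one_apply_ne (by rintro rfl; exact hn IsSquare.one)]

theorem isSquare_mul_iff_of_coprime {m n : ℕ} (hmn : m.Coprime n) :
    IsSquare (m * n) ↔ IsSquare m ∧ IsSquare n := by
  refine ⟨fun h ↦ ?_, fun h ↦ h.1.mul h.2⟩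
  obtain ⟨c, hc⟩ := (isSquare_iff_exists_sq _).mp h
  obtain ⟨a, ha⟩ := exists_eq_pow_of_mul_eq_pow (Nat.isUnit_iff.mpr hmn) hc
  obtain ⟨b, hb⟩ := exists_eq_pow_of_mul_eq_pow (Nat.isUnit_iff.mpr hmn.symm)
    ((mul_comm n m).trans hc)
  exact ⟨ha ▸ IsSquare.sq a, hb ▸ IsSquare.sq b⟩

theorem isMultiplicative_squareLift [MonoidWithZero R] {f : ArithmeticFunction R}
    (hf : f.IsMultiplicative) : (squareLift f).IsMultiplicative := by
  refine ⟨by simpa [hf.map_one] using squareLift_sq f 1, fun {m n} hmn ↦ ?_⟩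
  by_cases hsq : IsSquare m ∧ IsSquare n
  · obtain ⟨a, rfl⟩ := (isSquare_iff_exists_sq m).mp hsq.1
    obtain ⟨b, rfl⟩ := (isSquare_iff_exists_sq n).mp hsq.2
    have hab : a.Coprime b := (Nat.coprime_pow_left_iff two_pos _ _).mp
      ((Nat.coprime_pow_right_iff two_pos _ _).mp hmn)
    rw [← mul_pow, squareLift_sq, squareLift_sq, squareLift_sq, hf.map_mul_of_coprime hab]
  · rw [squareLift_of_not_isSquare f (mt (isSquare_mul_iff_of_coprime hmn).mp hsq)]
    rcases not_and_or.mp hsq with hm | hn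
    · rw [squareLift_of_not_isSquare f hm, zero_mul]
    · rw [squareLift_of_not_isSquare f hn, mul_zero]

theorem squareLift_mul [Semiring R] (f g : ArithmeticFunction R) :
    squareLift (f * g) = squareLift f * squareLift g := by
  have isSquare_of_ne_zero {z : ℕ × ℕ} (hz : squareLift f z.1 * squareLift g z.2 ≠ 0) :
      IsSquare z.1 ∧ IsSquare z.2 :=
    ⟨by_contra fun h ↦ hz (by rw [squareLift_of_not_isSquare f h, zero_mul]),
      by_contra fun h ↦ hz (by rw [squareLift_of_not_isSquare g h, mul_zero])⟩
  ext n
  rw [mul_apply]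
  by_cases hn : IsSquare n
  · obtain ⟨m, rfl⟩ := (isSquare_iff_exists_sq n).mp hn
    rw [squareLift_sq, mul_apply]
    refine sum_of_injOn (fun z ↦ (z.1 ^ 2, z.2 ^ 2)) ?_ ?_ (fun z hz hz' ↦ ?_) ?_
    · intro z _ w _ hzw
      simpa [Prod.ext_iff] using hzw
    · intro z hz
      simp_all [← mul_pow]
    · by_contra hne
      obtain ⟨⟨a, ha⟩, b, hb⟩ := isSquare_of_ne_zero hne
      refine hz' ⟨(a, b), ?_, by simp [Prod.ext_iff, ha, hb, sq]⟩
      simp only [Nat.mem_divisorsAntidiagonal, ha, hb] at hz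
      simp only [mem_coe, Nat.mem_divisorsAntidiagonal]
      exact ⟨Nat.pow_left_injective two_ne_zero (by linear_combination hz.1), by simpa using hz.2⟩
    · simp [squareLift_sq]
  · rw [squareLift_of_not_isSquare _ hn]
    refine (sum_eq_zero fun z hz ↦ by_contra fun hne ↦ hn ?_).symm
    rw [← (Nat.mem_divisorsAntidiagonal.mp hz).1]
    exact (isSquare_of_ne_zero hne).1.mul (isSquare_of_ne_zero hne).2

theorem sum_Ioc_squareLift_mul [Semiring R] (f : ArithmeticFunction R) (g : ℕ → R) (N : ℕ) :
    ∑ n ∈ Ioc 0 N, squareLift f n * g n = ∑ m ∈ Ioc 0 N.sqrt, f m * g (m ^ 2) := by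
  refine (sum_of_injOn (· ^ 2) ?_ ?_ (fun n hn hn' ↦ ?_) ?_).symm
  · exact (Nat.pow_left_injective two_ne_zero).injOn
  · intro m hm
    simp_all [Nat.le_sqrt']
  · rw [squareLift_of_not_isSquare, zero_mul]
    rintro ⟨m, rfl⟩
    simp only [mem_Ioc, mul_self_pos] at hn
    exact hn' ⟨m, by simpa [Nat.le_sqrt, Nat.pos_iff_ne_zero] using hn, sq m⟩
  · simp [squareLift_sq]

end SquareLift

section SquareDivisorCount

/-- The number of `b` with `b ^ 2 ∣ n`, whose Dirichlet series is `ζ(s) ζ(2s)`. -/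
noncomputable def squareDivisorCount : ArithmeticFunction ℝ :=
  squareLift (ζ : ArithmeticFunction ℝ) * (ζ : ArithmeticFunction ℝ)

/-- The Dirichlet inverse of `squareDivisorCount`, with Dirichlet series `1 / (ζ(s) ζ(2s))`. -/
noncomputable def squareDivisorCountInv : ArithmeticFunction ℝ :=
  squareLift (μ : ArithmeticFunction ℝ) * (μ : ArithmeticFunction ℝ)

theorem squareDivisorCount_mul_inv : squareDivisorCount * squareDivisorCountInv = 1 := by
  rw [squareDivisorCount, squareDivisorCountInv, mul_mul_mul_comm, ← squareLift_mul,
    coe_zeta_mul_coe_moebius, squareLift_one, one_mul]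

theorem isMultiplicative_squareDivisorCountInv : squareDivisorCountInv.IsMultiplicative :=
  (isMultiplicative_squareLift isMultiplicative_moebius.intCast).mul
    isMultiplicative_moebius.intCast

theorem squareDivisorCountInv_prime_pow {p : ℕ} (hp : p.Prime) (k : ℕ) :
    squareDivisorCountInv (p ^ k) = ∑ i ∈ antidiagonal k,
      squareLift (μ : ArithmeticFunction ℝ) (p ^ i.1) * (μ : ArithmeticFunction ℝ) (p ^ i.2) := by
  rw [squareDivisorCountInv, mul_apply, sum_divisorsAntidiagonal_prime_pow hp k
    fun i j ↦ squareLift (μ : ArithmeticFunction ℝ) i * (μ : ArithmeticFunction ℝ) j]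

theorem squareDivisorCountInv_prime {p : ℕ} (hp : p.Prime) : squareDivisorCountInv p = -1 := by
  have hlift := isMultiplicative_squareLift (isMultiplicative_moebius.intCast (R := ℝ))
  simpa [Nat.antidiagonal_succ, hlift.map_one, moebius_apply_prime hp,
    squareLift_of_not_isSquare _ hp.prime.not_isSquare] using squareDivisorCountInv_prime_pow hp 1

theorem squareDivisorCountInv_prime_sq {p : ℕ} (hp : p.Prime) :
    squareDivisorCountInv (p ^ 2) = -1 := by
  have hlift := isMultiplicative_squareLift (isMultiplicative_moebius.intCast (R := ℝ))
  simpa [Nat.antidiagonal_succ, hlift.map_one, moebius_apply_prime hp,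
    moebius_apply_prime_pow hp, squareLift_sq, squareLift_of_not_isSquare _ hp.prime.not_isSquare]
    using squareDivisorCountInv_prime_pow hp 2

theorem abs_squareDivisorCountInv_prime_pow_le {p : ℕ} (hp : p.Prime) (k : ℕ) :
    |squareDivisorCountInv (p ^ k)| ≤ k + 1 := by
  have abs_moebius_le (n : ℕ) : |(μ : ArithmeticFunction ℝ) n| ≤ 1 := by
    rw [intCoe_apply]
    exact_mod_cast abs_moebius_le_one
  have abs_squareLift_le (n : ℕ) : |squareLift (μ : ArithmeticFunction ℝ) n| ≤ 1 := by
    by_cases hn : IsSquare n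
    · obtain ⟨m, rfl⟩ := (isSquare_iff_exists_sq n).mp hn
      rw [squareLift_sq]
      exact abs_moebius_le m
    · simp [squareLift_of_not_isSquare _ hn]
  rw [squareDivisorCountInv_prime_pow hp]
  refine (abs_sum_le_sum_abs _ _).trans ((sum_le_card_nsmul _ _ 1 fun x _ ↦ ?_).trans_eq (by simp))
  rw [abs_mul]
  exact mul_le_one₀ (abs_squareLift_le _) (abs_nonneg _) (abs_moebius_le _)

end SquareDivisorCount

section Residual

/-- The coefficients of `(∑ f(mn) m⁻ˢ n⁻ʷ) / (ζ(s) ζ(2s) ζ(w) ζ(2w))`. -/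
noncomputable def residual (f : ℕ → ℝ) (d e : ℕ) : ℝ :=
  (⇑squareDivisorCountInv ⍟ fun m ↦ (⇑squareDivisorCountInv ⍟ fun n ↦ f (m * n)) e) d

variable {f : ℕ → ℝ}

theorem residual_eq_sum (f : ℕ → ℝ) (d e : ℕ) :
    residual f d e = ∑ x ∈ d.divisorsAntidiagonal, ∑ y ∈ e.divisorsAntidiagonal,
      squareDivisorCountInv x.1 * squareDivisorCountInv y.1 * f (x.2 * y.2) := by
  simp only [residual, LSeries.convolution_def, mul_sum, mul_assoc]

theorem residual_comm (f : ℕ → ℝ) (d e : ℕ) : residual f d e = residual f e d := by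
  rw [residual_eq_sum, residual_eq_sum, sum_comm]
  refine sum_congr rfl fun x _ ↦ sum_congr rfl fun y _ ↦ ?_
  rw [mul_comm x.2, mul_comm (squareDivisorCountInv y.1)]

theorem residual_zero_left (f : ℕ → ℝ) (e : ℕ) : residual f 0 e = 0 := by
  simp [residual_eq_sum]

theorem residual_zero_right (f : ℕ → ℝ) (d : ℕ) : residual f d 0 = 0 := by
  simp [residual_eq_sum]

theorem residual_one_one (f : ℕ → ℝ) : residual f 1 1 = f 1 := by
  simp [residual_eq_sum, isMultiplicative_squareDivisorCountInv.map_one]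

theorem sum_Ioc_sum_Ioc_eq_sum_residual (f : ℕ → ℝ) (N : ℕ) :
    ∑ m ∈ Ioc 0 N, ∑ n ∈ Ioc 0 N, f (m * n) =
      ∑ d ∈ Ioc 0 N, ∑ e ∈ Ioc 0 N, residual f d e *
        ((∑ i ∈ Ioc 0 (N / d), squareDivisorCount i) *
          ∑ i ∈ Ioc 0 (N / e), squareDivisorCount i) := by
  have sum_right (m : ℕ) := sum_Ioc_eq_sum_convolution_mul squareDivisorCount_mul_inv
    (fun n ↦ f (m * n)) N
  have sum_left (e : ℕ) := sum_Ioc_eq_sum_convolution_mul squareDivisorCount_mul_inv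
    (fun m ↦ (⇑squareDivisorCountInv ⍟ fun n ↦ f (m * n)) e) N
  simp only [sum_right]
  rw [sum_comm, sum_comm (s := Ioc 0 N) (t := Ioc 0 N) (f := fun d e ↦ residual f d e * _)]
  refine sum_congr rfl fun e _ ↦ ?_
  rw [← sum_mul, sum_left, sum_mul]
  exact sum_congr rfl fun d _ ↦ mul_assoc _ _ _

theorem residual_mul_mul (hmul : ∀ m n, m.Coprime n → f (m * n) = f m * f n)
    {d₁ e₁ d₂ e₂ : ℕ} (h : (d₁ * e₁).Coprime (d₂ * e₂)) :
    residual f (d₁ * d₂) (e₁ * e₂) = residual f d₁ e₁ * residual f d₂ e₂ := by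
  have hd : d₁.Coprime d₂ := h.coprime_mul_right.coprime_mul_right_right
  have he : e₁.Coprime e₂ := h.coprime_mul_left.coprime_mul_left_right
  simp only [residual_eq_sum]
  rw [sum_divisorsAntidiagonal_mul_of_coprime hd fun i j ↦ ∑ y ∈ (e₁ * e₂).divisorsAntidiagonal,
    squareDivisorCountInv i * squareDivisorCountInv y.1 * f (j * y.2), sum_mul_sum]
  refine sum_congr rfl fun x hx ↦ sum_congr rfl fun x' hx' ↦ ?_
  rw [sum_divisorsAntidiagonal_mul_of_coprime he fun k l ↦
    squareDivisorCountInv (x.1 * x'.1) * squareDivisorCountInv k * f (x.2 * x'.2 * l), sum_mul_sum]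
  refine sum_congr rfl fun y hy ↦ sum_congr rfl fun y' hy' ↦ ?_
  obtain ⟨rfl, -⟩ := Nat.mem_divisorsAntidiagonal.mp hx
  obtain ⟨rfl, -⟩ := Nat.mem_divisorsAntidiagonal.mp hx'
  obtain ⟨rfl, -⟩ := Nat.mem_divisorsAntidiagonal.mp hy
  obtain ⟨rfl, -⟩ := Nat.mem_divisorsAntidiagonal.mp hy'
  have hf : f (x.2 * x'.2 * (y.2 * y'.2)) = f (x.2 * y.2) * f (x'.2 * y'.2) := by
    rw [mul_mul_mul_comm, hmul]
    exact h.of_dvd (mul_dvd_mul (dvd_mul_left _ _) (dvd_mul_left _ _))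
      (mul_dvd_mul (dvd_mul_left _ _) (dvd_mul_left _ _))
  rw [isMultiplicative_squareDivisorCountInv.map_mul_of_coprime
      (hd.of_dvd (dvd_mul_right _ _) (dvd_mul_right _ _)),
    isMultiplicative_squareDivisorCountInv.map_mul_of_coprime
      (he.of_dvd (dvd_mul_right _ _) (dvd_mul_right _ _)), hf]
  ring

theorem residual_prime_pow {p : ℕ} (hp : p.Prime) (f : ℕ → ℝ) (a b : ℕ) :
    residual f (p ^ a) (p ^ b) = ∑ i ∈ antidiagonal a, ∑ j ∈ antidiagonal b,
      squareDivisorCountInv (p ^ i.1) * squareDivisorCountInv (p ^ j.1) * f (p ^ (i.2 + j.2)) := by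
  rw [residual_eq_sum, sum_divisorsAntidiagonal_prime_pow hp a fun i j ↦
    ∑ y ∈ (p ^ b).divisorsAntidiagonal,
      squareDivisorCountInv i * squareDivisorCountInv y.1 * f (j * y.2)]
  refine sum_congr rfl fun i _ ↦ ?_
  rw [sum_divisorsAntidiagonal_prime_pow hp b fun k l ↦
    squareDivisorCountInv (p ^ i.1) * squareDivisorCountInv k * f (p ^ i.2 * l)]
  simp only [pow_add]

theorem residual_prime_pow_one_eq_zero {p : ℕ} (hp : p.Prime) (h1 : f 1 = 1) (hfp : f p = 1)
    (hfp2 : f (p ^ 2) = 2) {a : ℕ} (ha0 : a ≠ 0) (ha : a ≤ 2) : residual f (p ^ a) 1 = 0 := by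
  have hν := squareDivisorCountInv_prime hp
  have hν2 := squareDivisorCountInv_prime_sq hp
  have h := residual_prime_pow hp f a 0
  rw [pow_zero] at h
  rw [h]
  obtain rfl | rfl : a = 1 ∨ a = 2 := by omega
  · simp [Nat.antidiagonal_succ, isMultiplicative_squareDivisorCountInv.map_one, h1, hfp, hν]
  · norm_num [Nat.antidiagonal_succ, isMultiplicative_squareDivisorCountInv.map_one, h1, hfp,
      hfp2, hν, hν2]

theorem abs_residual_prime_pow_le {p : ℕ} (hp : p.Prime) {A : ℝ} {N : ℕ}
    (hbound : ∀ k : ℕ, |f (p ^ k)| ≤ A * (k + 1) ^ N) {a b k : ℕ} (hab : a + b = k) :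
    |residual f (p ^ a) (p ^ b)| ≤ A * (k + 1) ^ (N + 4) := by
  have hA : 0 ≤ A := by simpa using (abs_nonneg _).trans (hbound 0)
  have ha : (a : ℝ) + 1 ≤ k + 1 := by
    norm_cast
    omega
  have hb : (b : ℝ) + 1 ≤ k + 1 := by
    norm_cast
    omega
  have term_le : ∀ i ∈ antidiagonal a, ∀ j ∈ antidiagonal b,
      |squareDivisorCountInv (p ^ i.1) * squareDivisorCountInv (p ^ j.1) * f (p ^ (i.2 + j.2))| ≤
        (k + 1) * (k + 1) * (A * (k + 1) ^ N) := by
    intro i hi j hj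
    rw [HasAntidiagonal.mem_antidiagonal] at hi hj
    rw [abs_mul, abs_mul]
    gcongr
    · refine (abs_squareDivisorCountInv_prime_pow_le hp _).trans ?_
      norm_cast
      omega
    · refine (abs_squareDivisorCountInv_prime_pow_le hp _).trans ?_
      norm_cast
      omega
    · refine (hbound _).trans ?_
      gcongr
      omega
  calc |residual f (p ^ a) (p ^ b)|
      ≤ ∑ i ∈ antidiagonal a, ∑ j ∈ antidiagonal b,
          ((k : ℝ) + 1) * (k + 1) * (A * (k + 1) ^ N) := by
        rw [residual_prime_pow hp]
        exact (abs_sum_le_sum_abs _ _).trans <| sum_le_sum fun i hi ↦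
          (abs_sum_le_sum_abs _ _).trans <| sum_le_sum (term_le i hi)
    _ = (a + 1) * ((b + 1) * ((k + 1) * (k + 1) * (A * (k + 1) ^ N))) := by simp
    _ ≤ (k + 1) * ((k + 1) * ((k + 1) * (k + 1) * (A * (k + 1) ^ N))) := by gcongr
    _ = A * (k + 1) ^ (N + 4) := by ring

end Residual

section Summability

theorem sum_range_le_prod_tsum_prime_pow {g : ArithmeticFunction ℝ} (hg : g.IsMultiplicative)
    (hnonneg : ∀ n, 0 ≤ g n) (hsum : ∀ {p : ℕ}, p.Prime → Summable fun k ↦ g (p ^ k)) (M : ℕ) :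
    ∑ n ∈ range M, g n ≤ ∏ p ∈ M.primesBelow, ∑' k, g (p ^ k) := by
  have euler := (EulerProduct.summable_and_hasSum_smoothNumbers_prod_primesBelow_tsum
    hg.map_one hg.map_mul_of_coprime (fun hp ↦ (hsum hp).norm) M).2
  have indicator_nonneg (n : ℕ) : 0 ≤ (M.smoothNumbers : Set ℕ).indicator g n :=
    Set.indicator_nonneg (fun _ _ ↦ hnonneg _) n
  refine (sum_le_sum fun n hn ↦ ?_).trans <| sum_le_hasSum (range M)
    (fun n _ ↦ indicator_nonneg n) ((hasSum_subtype_iff_indicator (f := g)).mp euler)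
  rcases n.eq_zero_or_pos with rfl | hpos
  · simpa using indicator_nonneg 0
  · rw [Set.indicator_of_mem (Nat.mem_smoothNumbers_of_lt hpos (mem_range.mp hn))]

theorem summable_of_summable_prime_pow {g : ArithmeticFunction ℝ} (hg : g.IsMultiplicative)
    (hnonneg : ∀ n, 0 ≤ g n)
    (hsum : Summable fun q : Nat.Primes × ℕ ↦ g (q.1 ^ (q.2 + 1))) : Summable g := by
  have hlocal (p : Nat.Primes) : Summable fun k ↦ g (p ^ (k + 1)) := hsum.prod_factor p
  have htail_nonneg (p : Nat.Primes) : 0 ≤ ∑' k, g (p ^ (k + 1)) :=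
    tsum_nonneg fun _ ↦ hnonneg _
  have hpow {p : ℕ} (hp : p.Prime) : Summable fun k ↦ g (p ^ k) :=
    (summable_nat_add_iff 1).mp (hlocal ⟨p, hp⟩)
  have sum_primes_le (s : Finset Nat.Primes) : ∑ p ∈ s, ∑' k, g (p ^ (k + 1)) ≤
      ∑' p : Nat.Primes, ∑' k, g (p ^ (k + 1)) :=
    hsum.prod.sum_le_tsum s fun p _ ↦ htail_nonneg p
  refine summable_of_sum_range_le (c := Real.exp (∑' p : Nat.Primes, ∑' k, g (p ^ (k + 1))))
    hnonneg fun M ↦ ?_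
  calc ∑ n ∈ range M, g n ≤ ∏ p ∈ M.primesBelow, ∑' k, g (p ^ k) :=
        sum_range_le_prod_tsum_prime_pow hg hnonneg hpow M
    _ = ∏ p ∈ M.primesBelow.subtype Nat.Prime, (1 + ∑' k, g (p ^ (k + 1))) := by
        rw [← prod_subtype_of_mem _ fun p hp ↦ Nat.prime_of_mem_primesBelow hp]
        refine prod_congr rfl fun p _ ↦ ?_
        rw [(hpow p.2).tsum_eq_zero_add, pow_zero, hg.map_one]
    _ ≤ Real.exp (∑ p ∈ M.primesBelow.subtype Nat.Prime, ∑' k, g (p ^ (k + 1))) :=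
        Real.prod_one_add_le_exp_sum _ htail_nonneg
    _ ≤ Real.exp (∑' p : Nat.Primes, ∑' k, g (p ^ (k + 1))) :=
        Real.exp_le_exp.mpr (sum_primes_le _)

/-- The arithmetic function whose Dirichlet series is the diagonal `s = w` of the double Dirichlet
series with coefficients `|F (d, e)|`. -/
def diagonalFunction (F : ℕ × ℕ → ℝ) : ArithmeticFunction ℝ :=
  ⟨fun n ↦ ∑ z ∈ n.divisorsAntidiagonal, |F z|, by simp⟩

theorem diagonalFunction_apply (F : ℕ × ℕ → ℝ) (n : ℕ) :
    diagonalFunction F n = ∑ z ∈ n.divisorsAntidiagonal, |F z| := rfl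

theorem diagonalFunction_nonneg (F : ℕ × ℕ → ℝ) (n : ℕ) : 0 ≤ diagonalFunction F n := by
  rw [diagonalFunction_apply]
  exact sum_nonneg fun z _ ↦ abs_nonneg (F z)

theorem summable_of_summable_diagonalFunction {F : ℕ × ℕ → ℝ}
    (hzero : ∀ z, z.1 * z.2 = 0 → F z = 0) (hF : Summable (diagonalFunction F)) : Summable F := by
  refine (summable_of_sum_le (c := ∑' n, diagonalFunction F n) (fun z ↦ abs_nonneg (F z))
    fun s ↦ ?_).of_abs
  calc ∑ z ∈ s, |F z| = ∑ n ∈ s.image fun z ↦ z.1 * z.2, ∑ z ∈ s with z.1 * z.2 = n, |F z| :=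
        (sum_fiberwise_of_maps_to (fun z hz ↦ mem_image_of_mem _ hz) _).symm
    _ ≤ ∑ n ∈ s.image fun z ↦ z.1 * z.2, diagonalFunction F n := by
        refine sum_le_sum fun n _ ↦ ?_
        rw [diagonalFunction_apply]
        rcases eq_or_ne n 0 with rfl | hn
        · refine (sum_eq_zero fun z hz ↦ ?_).trans_le (by simp)
          rw [hzero z (mem_filter.mp hz).2, abs_zero]
        · refine sum_le_sum_of_subset_of_nonneg (fun z hz ↦ ?_) fun z _ _ ↦ abs_nonneg (F z)
          exact Nat.mem_divisorsAntidiagonal.mpr ⟨(mem_filter.mp hz).2, hn⟩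
    _ ≤ ∑' n, diagonalFunction F n :=
        hF.sum_le_tsum _ fun n _ ↦ diagonalFunction_nonneg F n

theorem isMultiplicative_diagonalFunction {F : ℕ × ℕ → ℝ} (hone : F 1 = 1)
    (hmul : ∀ z w : ℕ × ℕ, (z.1 * z.2).Coprime (w.1 * w.2) → F (z * w) = F z * F w) :
    (diagonalFunction F).IsMultiplicative := by
  refine ⟨by simp [diagonalFunction, ← Prod.one_eq_mk, hone], fun {m n} hmn ↦ ?_⟩
  rw [diagonalFunction_apply, diagonalFunction_apply, diagonalFunction_apply,
    sum_divisorsAntidiagonal_mul_of_coprime hmn fun i j ↦ |F (i, j)|, sum_mul_sum]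
  refine sum_congr rfl fun z hz ↦ sum_congr rfl fun w hw ↦ ?_
  rw [← abs_mul, ← hmul]
  · rfl
  · rwa [(Nat.mem_divisorsAntidiagonal.mp hz).1, (Nat.mem_divisorsAntidiagonal.mp hw).1]

/-- The terms of the double Dirichlet series of `residual f` at the point `(α, β)`. -/
noncomputable def residualTerm (f : ℕ → ℝ) (α β : ℝ) (z : ℕ × ℕ) : ℝ :=
  residual f z.1 z.2 * ((z.1 : ℝ) ^ (-α) * (z.2 : ℝ) ^ (-β))

theorem residualTerm_of_mul_eq_zero (f : ℕ → ℝ) (α β : ℝ) {z : ℕ × ℕ} (hz : z.1 * z.2 = 0) :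
    residualTerm f α β z = 0 := by
  rcases mul_eq_zero.mp hz with h | h <;>
    simp [residualTerm, h, residual_zero_left, residual_zero_right]

theorem residualTerm_one (f : ℕ → ℝ) (α β : ℝ) : residualTerm f α β 1 = f 1 := by
  simp [residualTerm, residual_one_one]

theorem residualTerm_mul {f : ℕ → ℝ} (hmul : ∀ m n, m.Coprime n → f (m * n) = f m * f n)
    (α β : ℝ) {z w : ℕ × ℕ} (hzw : (z.1 * z.2).Coprime (w.1 * w.2)) :
    residualTerm f α β (z * w) = residualTerm f α β z * residualTerm f α β w := by
  simp only [residualTerm, Prod.fst_mul, Prod.snd_mul, residual_mul_mul hmul hzw, Nat.cast_mul,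
    Real.mul_rpow (Nat.cast_nonneg _) (Nat.cast_nonneg _)]
  ring

theorem abs_residualTerm_prime_pow (f : ℕ → ℝ) (α β : ℝ) {p : ℕ} (hp : p.Prime) (a b : ℕ) :
    |residualTerm f α β (p ^ a, p ^ b)| =
      |residual f (p ^ a) (p ^ b)| * (p : ℝ) ^ (-(α * a + β * b)) := by
  have hp0 : (0 : ℝ) < p := mod_cast hp.pos
  have pow_rpow (c : ℝ) (k : ℕ) : ((p ^ k : ℕ) : ℝ) ^ (-c) = (p : ℝ) ^ (-(c * k)) := by
    rw [Nat.cast_pow, ← Real.rpow_natCast, ← Real.rpow_mul hp0.le]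
    ring_nf
  rw [residualTerm, pow_rpow, pow_rpow, ← Real.rpow_add hp0, abs_mul,
    Real.abs_rpow_of_nonneg hp0.le, abs_of_pos hp0, neg_add]

theorem three_le_or_eq_one_of_residual_prime_pow_ne_zero {f : ℕ → ℝ} {p : ℕ} (hp : p.Prime)
    (h1 : f 1 = 1) (hfp : f p = 1) (hfp2 : f (p ^ 2) = 2) {a b : ℕ} (hab : a + b ≠ 0)
    (hne : residual f (p ^ a) (p ^ b) ≠ 0) : 3 ≤ a + b ∨ a = 1 ∧ b = 1 := by
  by_contra! hsmall
  rcases eq_or_ne a 0 with rfl | ha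
  · rw [residual_comm, pow_zero] at hne
    exact hne (residual_prime_pow_one_eq_zero hp h1 hfp hfp2 (by lia) (by lia))
  · obtain rfl : b = 0 := by lia
    rw [pow_zero] at hne
    exact hne (residual_prime_pow_one_eq_zero hp h1 hfp hfp2 (by lia) (by lia))

theorem abs_residualTerm_prime_pow_le {f : ℕ → ℝ} {A : ℝ} {N : ℕ} {p : ℕ} (hp : p.Prime)
    (h1 : f 1 = 1) (hfp : f p = 1) (hfp2 : f (p ^ 2) = 2)
    (hbound : ∀ k : ℕ, |f (p ^ k)| ≤ A * (k + 1) ^ N) {θ α β : ℝ} (hθ : 0 ≤ θ) (hα : θ ≤ α)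
    (hβ : θ ≤ β) (hαβ : 3 * θ ≤ α + β) {a b k : ℕ} (hab : a + b = k) (hk : k ≠ 0) :
    |residualTerm f α β (p ^ a, p ^ b)| ≤
      A * (k + 1) ^ (N + 4) * (2 : ℝ) ^ (-(θ * (k - 3))) * (p : ℝ) ^ (-(3 * θ)) := by
  have hA : 0 ≤ A := by simpa using (abs_nonneg _).trans (hbound 0)
  have hp0 : (0 : ℝ) < p := mod_cast hp.pos
  have hp2 : (2 : ℝ) ≤ p := mod_cast hp.two_le
  rcases eq_or_ne (residual f (p ^ a) (p ^ b)) 0 with hzero | hne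
  · rw [abs_residualTerm_prime_pow f α β hp, hzero, abs_zero, zero_mul]
    positivity
  have mul_le_exponent : θ * k ≤ α * a + β * b := by
    rw [← hab, Nat.cast_add, mul_add]
    gcongr
  have three_mul_le_exponent : 3 * θ ≤ α * a + β * b := by
    rcases three_le_or_eq_one_of_residual_prime_pow_ne_zero hp h1 hfp hfp2 (hab.trans_ne hk) hne
      with hk3 | ⟨rfl, rfl⟩
    · have : (3 : ℝ) ≤ k := mod_cast hab ▸ hk3
      nlinarith
    · simpa using hαβ
  have rpow_le : (p : ℝ) ^ (-(α * a + β * b)) ≤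
      (2 : ℝ) ^ (-(θ * (k - 3))) * (p : ℝ) ^ (-(3 * θ)) :=
    calc (p : ℝ) ^ (-(α * a + β * b))
        = (p : ℝ) ^ (-(α * a + β * b - 3 * θ)) * (p : ℝ) ^ (-(3 * θ)) := by
          rw [← Real.rpow_add hp0]
          ring_nf
      _ ≤ (2 : ℝ) ^ (-(α * a + β * b - 3 * θ)) * (p : ℝ) ^ (-(3 * θ)) := by
          gcongr ?_ * _
          exact Real.rpow_le_rpow_of_nonpos two_pos hp2 (by linarith)
      _ ≤ (2 : ℝ) ^ (-(θ * (k - 3))) * (p : ℝ) ^ (-(3 * θ)) := by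
          gcongr
          · exact one_le_two
          · linarith
  rw [abs_residualTerm_prime_pow f α β hp, mul_assoc]
  gcongr
  exact abs_residual_prime_pow_le hp hbound hab

theorem summable_add_one_pow_mul_two_rpow (N : ℕ) {θ : ℝ} (hθ : 0 < θ) (c : ℝ) :
    Summable fun k : ℕ ↦ ((k : ℝ) + 1) ^ N * (2 : ℝ) ^ (-(θ * (k - c))) := by
  have hq : (2 : ℝ) ^ (-θ) < 1 := Real.rpow_lt_one_of_one_lt_of_neg one_lt_two (neg_neg_of_pos hθ)
  have hgeom := summable_pow_mul_geometric_of_norm_lt_one (r := (2 : ℝ) ^ (-θ)) N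
    (by rwa [Real.norm_of_nonneg (by positivity)])
  refine (((summable_nat_add_iff 1).mpr hgeom).mul_left ((2 : ℝ) ^ (θ * (c + 1)))).congr
    fun k ↦ ?_
  rw [← Real.rpow_mul_natCast zero_le_two, mul_left_comm, ← Real.rpow_add two_pos]
  push_cast
  ring_nf

theorem diagonalFunction_residualTerm_prime_pow_le {f : ℕ → ℝ} {A : ℝ} {N : ℕ} {p : ℕ}
    (hp : p.Prime) (h1 : f 1 = 1) (hfp : f p = 1) (hfp2 : f (p ^ 2) = 2)
    (hbound : ∀ k : ℕ, |f (p ^ k)| ≤ A * (k + 1) ^ N) {θ α β : ℝ} (hθ : 0 ≤ θ) (hα : θ ≤ α)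
    (hβ : θ ≤ β) (hαβ : 3 * θ ≤ α + β) {k : ℕ} (hk : k ≠ 0) :
    diagonalFunction (residualTerm f α β) (p ^ k) ≤
      (p : ℝ) ^ (-(3 * θ)) * (A * ((k + 1) ^ (N + 5) * (2 : ℝ) ^ (-(θ * (k - 3))))) := by
  rw [diagonalFunction_apply, sum_divisorsAntidiagonal_prime_pow hp k fun i j ↦
    |residualTerm f α β (i, j)|]
  refine (sum_le_card_nsmul _ _ _ fun z hz ↦ abs_residualTerm_prime_pow_le hp h1 hfp hfp2 hbound
    hθ hα hβ hαβ (HasAntidiagonal.mem_antidiagonal.mp hz) hk).trans_eq ?_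
  rw [Nat.card_antidiagonal, nsmul_eq_mul]
  push_cast
  ring

theorem summable_residualTerm {f : ℕ → ℝ} {A : ℝ} {N : ℕ} (h1 : f 1 = 1)
    (hmul : ∀ m n, m.Coprime n → f (m * n) = f m * f n) (hprime : ∀ p, p.Prime → f p = 1)
    (hprime_sq : ∀ p, p.Prime → f (p ^ 2) = 2)
    (hbound : ∀ p k : ℕ, p.Prime → |f (p ^ k)| ≤ A * (k + 1) ^ N)
    {α β : ℝ} (hα : 1 / 3 < α) (hβ : 1 / 3 < β) (hαβ : 1 < α + β) :
    Summable (residualTerm f α β) := by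
  obtain ⟨θ, hθ, hθα, hθβ, hθαβ⟩ : ∃ θ, 1 / 3 < θ ∧ θ ≤ α ∧ θ ≤ β ∧ 3 * θ ≤ α + β :=
    ⟨min (min α β) ((α + β) / 3), lt_min (lt_min hα hβ) (by linarith), by simp, by simp, by
      linarith [min_le_right (min α β) ((α + β) / 3)]⟩
  have hA : 0 ≤ A := by simpa using (abs_nonneg _).trans (hbound 2 0 Nat.prime_two)
  have hmult : (diagonalFunction (residualTerm f α β)).IsMultiplicative :=
    isMultiplicative_diagonalFunction (by rw [residualTerm_one, h1])
      fun z w hzw ↦ residualTerm_mul hmul α β hzw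
  have hprimes : Summable fun p : Nat.Primes ↦ (p : ℝ) ^ (-(3 * θ)) :=
    Nat.Primes.summable_rpow.mpr (by linarith)
  have hexponents := (summable_nat_add_iff 1).mpr
    (summable_add_one_pow_mul_two_rpow (N + 5) (show 0 < θ by linarith) 3)
  refine summable_of_summable_diagonalFunction (fun z hz ↦ residualTerm_of_mul_eq_zero f α β hz) <|
    summable_of_summable_prime_pow hmult (diagonalFunction_nonneg _) ?_
  exact (hprimes.mul_of_nonneg (hexponents.mul_left A) (fun p ↦ by positivity)
    fun k ↦ by positivity).of_nonneg_of_le (fun q ↦ diagonalFunction_nonneg _ _) fun q ↦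
      diagonalFunction_residualTerm_prime_pow_le q.1.2 h1 (hprime _ q.1.2) (hprime_sq _ q.1.2)
        (fun k ↦ hbound _ k q.1.2) (by linarith) hθα hθβ hθαβ q.2.succ_ne_zero

end Summability

section SquareDivisorSum

theorem exists_abs_sum_Ioc_sub_le {f F : ℕ → ℝ} (hnonneg : ∀ n, 0 ≤ f n)
    (hlower : ∀ n, f (n + 2) ≤ F (n + 2) - F (n + 1))
    (hupper : ∀ n, F (n + 2) - F (n + 1) ≤ f (n + 1)) :
    ∃ c, ∀ N ≠ 0, |∑ n ∈ Ioc 0 N, f n - (F N + c)| ≤ f N := by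
  set S : ℕ → ℝ := fun n ↦ ∑ i ∈ Ioc 0 (n + 1), f i - F (n + 1) with hS
  have S_succ (n : ℕ) : S (n + 1) = S n + f (n + 2) - (F (n + 2) - F (n + 1)) := by
    simp only [hS, sum_Ioc_succ_top (Nat.zero_le (n + 1))]
    ring
  have hmono : Monotone fun n ↦ S n - f (n + 1) := monotone_nat_of_le_succ fun n ↦ by
    linarith [S_succ n, hupper n]
  have hanti : Antitone S := antitone_nat_of_succ_le fun n ↦ by linarith [S_succ n, hlower n]
  have hmem := hmono.ciSup_mem_iInter_Icc_of_antitone hanti fun n ↦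
    sub_le_self _ (hnonneg (n + 1))
  refine ⟨⨆ n, (S n - f (n + 1)), fun N hN ↦ ?_⟩
  obtain ⟨n, rfl⟩ := Nat.exists_eq_succ_of_ne_zero hN
  obtain ⟨hl, hu⟩ := Set.mem_iInter.mp hmem n
  rw [← sub_sub, abs_of_nonneg (sub_nonneg.mpr hu)]
  linarith

theorem exists_abs_sum_one_div_sq_sub_le :
    ∃ c, ∀ N : ℕ, N ≠ 0 →
      |∑ n ∈ Ioc 0 N, 1 / (n : ℝ) ^ 2 - (-(1 / (N : ℝ)) + c)| ≤ 1 / (N : ℝ) ^ 2 := by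
  refine exists_abs_sum_Ioc_sub_le (F := fun n ↦ -(1 / (n : ℝ))) (fun n ↦ by positivity)
    (fun n ↦ ?_) fun n ↦ ?_ <;>
  · push_cast
    field_simp
    nlinarith

theorem exists_abs_sum_one_div_sqrt_sub_le :
    ∃ c, ∀ N : ℕ, N ≠ 0 → |∑ n ∈ Ioc 0 N, 1 / √(n : ℝ) - (2 * √N + c)| ≤ 1 / √(N : ℝ) := by
  have sqrt_add_one_sub (n : ℕ) :
      √((n : ℝ) + 2) ^ 2 = √((n : ℝ) + 1) ^ 2 + 1 := by
    rw [Real.sq_sqrt (by positivity), Real.sq_sqrt (by positivity)]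
    ring
  refine exists_abs_sum_Ioc_sub_le (fun n ↦ by positivity) (fun n ↦ ?_) fun n ↦ ?_ <;>
    push_cast
  · rw [div_le_iff₀ (by positivity)]
    nlinarith [sqrt_add_one_sub n, sq_nonneg (√((n : ℝ) + 2) - √((n : ℝ) + 1))]
  · rw [le_div_iff₀ (by positivity)]
    nlinarith [sqrt_add_one_sub n, sq_nonneg (√((n : ℝ) + 2) - √((n : ℝ) + 1))]

theorem abs_floor_sub_le {y : ℝ} (hy : 0 ≤ y) : |(⌊y⌋₊ : ℝ) - y| ≤ 1 := by
  rw [abs_le]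
  constructor <;> linarith [Nat.floor_le hy, Nat.lt_floor_add_one y]

theorem abs_sqrt_floor_sub_le {y : ℝ} (hy : 0 ≤ y) : |(⌊y⌋₊.sqrt : ℝ) - √y| ≤ 1 := by
  have hle : (⌊y⌋₊.sqrt : ℝ) ≤ √y := Real.le_sqrt_of_sq_le <|
    le_trans (mod_cast Nat.sqrt_le' _) (Nat.floor_le hy)
  have hlt : √y ≤ ⌊y⌋₊.sqrt + 1 := (Real.sqrt_le_left (by positivity)).mpr <|
    (Nat.lt_floor_add_one y).le.trans (mod_cast Nat.lt_succ_sqrt' _)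
  rw [abs_le]
  constructor <;> linarith

theorem abs_sum_Ioc_floor_div_sq_sub_le {y : ℝ} (hy : 0 ≤ y) (B : ℕ) :
    |∑ b ∈ Ioc 0 B, ((⌊y⌋₊ / b ^ 2 : ℕ) : ℝ) - y * ∑ b ∈ Ioc 0 B, 1 / (b : ℝ) ^ 2| ≤ B := by
  have hterm (b : ℕ) : |((⌊y⌋₊ / b ^ 2 : ℕ) : ℝ) - y * (1 / (b : ℝ) ^ 2)| ≤ 1 := by
    rw [mul_one_div, ← Nat.floor_div_natCast, Nat.cast_pow]
    exact abs_floor_sub_le (by positivity)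
  rw [mul_sum, ← sum_sub_distrib]
  exact (abs_sum_le_sum_abs _ _).trans ((sum_le_sum fun b _ ↦ hterm b).trans_eq (by simp))

theorem abs_sum_Ioc_sqrt_floor_div_sub_le {y : ℝ} (hy : 0 ≤ y) (A : ℕ) :
    |∑ a ∈ Ioc 0 A, ((⌊y⌋₊ / a).sqrt : ℝ) - √y * ∑ a ∈ Ioc 0 A, 1 / √(a : ℝ)| ≤ A := by
  have hterm (a : ℕ) : |((⌊y⌋₊ / a).sqrt : ℝ) - √y * (1 / √(a : ℝ))| ≤ 1 := by
    rw [mul_one_div, ← Real.sqrt_div hy, ← Nat.floor_div_natCast]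
    exact abs_sqrt_floor_sub_le (by positivity)
  rw [mul_sum, ← sum_sub_distrib]
  exact (abs_sum_le_sum_abs _ _).trans ((sum_le_sum fun a _ ↦ hterm a).trans_eq (by simp))

theorem sum_Ioc_div_sq_eq_sum_Ioc_sqrt_div_sub {M B : ℕ} (hB : B ≠ 0) :
    ∑ b ∈ Ioc B M.sqrt, M / b ^ 2 = ∑ a ∈ Ioc 0 (M / B ^ 2), ((M / a).sqrt - B) := by
  have hrow : ∀ b ∈ Ioc B M.sqrt, {a ∈ Ioc 0 (M / B ^ 2) | a * b ^ 2 ≤ M} = Ioc 0 (M / b ^ 2) := by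
    intro b hb
    have hBb : B < b := (mem_Ioc.mp hb).1
    have hle : M / b ^ 2 ≤ M / B ^ 2 := Nat.div_le_div_left (by gcongr) (by positivity)
    have hb_pos : 0 < b ^ 2 := pow_pos (B.zero_le.trans_lt hBb) 2
    ext a
    simp only [mem_filter, mem_Ioc, ← Nat.le_div_iff_mul_le hb_pos]
    lia
  have hcolumn : ∀ a ∈ Ioc 0 (M / B ^ 2),
      {b ∈ Ioc B M.sqrt | a * b ^ 2 ≤ M} = Ioc B (M / a).sqrt := by
    intro a ha
    have hle : (M / a).sqrt ≤ M.sqrt := Nat.sqrt_le_sqrt (Nat.div_le_self M a)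
    ext b
    simp only [mem_filter, mem_Ioc, mul_comm a, ← Nat.le_div_iff_mul_le (mem_Ioc.mp ha).1,
      ← Nat.le_sqrt']
    lia
  calc ∑ b ∈ Ioc B M.sqrt, M / b ^ 2
      = ∑ b ∈ Ioc B M.sqrt, #{a ∈ Ioc 0 (M / B ^ 2) | a * b ^ 2 ≤ M} :=
        sum_congr rfl fun b hb ↦ by simp [hrow b hb]
    _ = ∑ a ∈ Ioc 0 (M / B ^ 2), #{b ∈ Ioc B M.sqrt | a * b ^ 2 ≤ M} :=
        sum_card_bipartiteAbove_eq_sum_card_bipartiteBelow _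
    _ = ∑ a ∈ Ioc 0 (M / B ^ 2), ((M / a).sqrt - B) :=
        sum_congr rfl fun a ha ↦ by simp [hcolumn a ha]

/-- Dirichlet's hyperbola method for the lattice points `a * b ^ 2 ≤ M`, with the product term
moved to the left so that no subtraction occurs. -/
theorem sum_Ioc_div_sq_add_eq {M B : ℕ} (hB : B ≠ 0) (hBM : B ≤ M.sqrt) :
    ∑ b ∈ Ioc 0 M.sqrt, M / b ^ 2 + M / B ^ 2 * B =
      ∑ b ∈ Ioc 0 B, M / b ^ 2 + ∑ a ∈ Ioc 0 (M / B ^ 2), (M / a).sqrt := by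
  have hle : ∀ a ∈ Ioc 0 (M / B ^ 2), B ≤ (M / a).sqrt := by
    intro a ha
    obtain ⟨ha_pos, haM⟩ := mem_Ioc.mp ha
    rw [Nat.le_div_iff_mul_le (by positivity)] at haM
    rwa [Nat.le_sqrt', Nat.le_div_iff_mul_le ha_pos, mul_comm]
  have hsub : ∑ a ∈ Ioc 0 (M / B ^ 2), ((M / a).sqrt - B) + M / B ^ 2 * B =
      ∑ a ∈ Ioc 0 (M / B ^ 2), (M / a).sqrt := by
    rw [← sum_congr rfl fun a ha ↦ Nat.sub_add_cancel (hle a ha), sum_add_distrib]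
    simp
  rw [← sum_Ioc_consecutive _ B.zero_le hBM, sum_Ioc_div_sq_eq_sum_Ioc_sqrt_div_sub hB, add_assoc,
    hsub]

theorem sum_Ioc_squareDivisorCount (M : ℕ) :
    ∑ n ∈ Ioc 0 M, squareDivisorCount n = ((∑ b ∈ Ioc 0 M.sqrt, M / b ^ 2 : ℕ) : ℝ) := by
  rw [squareDivisorCount, sum_Ioc_mul_zeta_eq_sum, sum_Ioc_squareLift_mul, Nat.cast_sum]
  refine sum_congr rfl fun b hb ↦ ?_
  simp [(mem_Ioc.mp hb).1.ne']

/-- The summatory function of `squareDivisorCount` at a real argument. -/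
noncomputable def squareDivisorSum (y : ℝ) : ℝ :=
  ∑ n ∈ Ioc 0 ⌊y⌋₊, squareDivisorCount n

theorem squareDivisorSum_add_eq {y : ℝ} {B : ℕ} (hB : B ≠ 0) (hBy : (B : ℝ) ^ 2 ≤ y) :
    squareDivisorSum y + ⌊y / (B : ℝ) ^ 2⌋₊ * B =
      ∑ b ∈ Ioc 0 B, ((⌊y⌋₊ / b ^ 2 : ℕ) : ℝ) +
        ∑ a ∈ Ioc 0 ⌊y / (B : ℝ) ^ 2⌋₊, ((⌊y⌋₊ / a).sqrt : ℝ) := by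
  have hfloor : ⌊y / (B : ℝ) ^ 2⌋₊ = ⌊y⌋₊ / B ^ 2 := by
    rw [← Nat.floor_div_natCast, Nat.cast_pow]
  have hBM : B ≤ ⌊y⌋₊.sqrt := Nat.le_sqrt'.mpr (Nat.le_floor (mod_cast hBy))
  rw [squareDivisorSum, sum_Ioc_squareDivisorCount, hfloor]
  exact_mod_cast sum_Ioc_div_sq_add_eq hB hBM

theorem sqrt_sub_sqrt_floor_sq_le {z : ℝ} (hz : 0 ≤ z) : (√z - √⌊z⌋₊) ^ 2 ≤ 1 := by
  have hle : √(⌊z⌋₊ : ℝ) ≤ √z := Real.sqrt_le_sqrt (Nat.floor_le hz)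
  have hsqrt := Real.sq_sqrt hz
  have hsqrt_floor := Real.sq_sqrt (Nat.cast_nonneg (α := ℝ) ⌊z⌋₊)
  nlinarith [Nat.lt_floor_add_one z, mul_le_mul_of_nonneg_left hle (Real.sqrt_nonneg (⌊z⌋₊ : ℝ))]

/-- The main terms which the two sides of the hyperbola method contribute beyond those of the
asymptotic formula nearly cancel: they add up to `-B (√z - √⌊z⌋) ^ 2` where `z = y / B ^ 2`. -/
theorem abs_hyperbola_boundary_le {z : ℝ} (hz : 0 ≤ z) {B : ℝ} (hB : 0 ≤ B) :
    |-(B * z) + 2 * (B * √z) * √⌊z⌋₊ - ⌊z⌋₊ * B| ≤ B := by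
  have hsquare : -(B * z) + 2 * (B * √z) * √⌊z⌋₊ - ⌊z⌋₊ * B = -(B * (√z - √⌊z⌋₊) ^ 2) := by
    linear_combination B * Real.sq_sqrt hz + B * Real.sq_sqrt (Nat.cast_nonneg (α := ℝ) ⌊z⌋₊)
  rw [hsquare, abs_neg, abs_of_nonneg (by positivity)]
  exact mul_le_of_le_one_right hB (sqrt_sub_sqrt_floor_sq_le hz)

theorem sqrt_le_two_mul_sqrt_floor {z : ℝ} (hz : 1 ≤ z) : √z ≤ 2 * √⌊z⌋₊ := by
  have hfloor : (1 : ℝ) ≤ ⌊z⌋₊ := mod_cast Nat.one_le_floor_iff z |>.mpr hz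
  refine Real.sqrt_le_iff.mpr ⟨by positivity, ?_⟩
  rw [mul_pow, Real.sq_sqrt (by positivity)]
  linarith [Nat.lt_floor_add_one z]

theorem exists_abs_squareDivisorSum_sub_le_add :
    ∃ κ ν : ℝ, ∀ (y : ℝ) (B : ℕ), B ≠ 0 → (B : ℝ) ^ 2 ≤ y →
      |squareDivisorSum y - κ * y - ν * √y| ≤ 4 * B + 2 * (y / (B : ℝ) ^ 2) := by
  obtain ⟨κ, hκ⟩ := exists_abs_sum_one_div_sq_sub_le
  obtain ⟨ν, hν⟩ := exists_abs_sum_one_div_sqrt_sub_le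
  refine ⟨κ, ν, fun y B hB hBy ↦ ?_⟩
  have hB_pos : (0 : ℝ) < B := mod_cast Nat.pos_of_ne_zero hB
  have hy : 0 ≤ y := (sq_nonneg _).trans hBy
  have hhyperbola := squareDivisorSum_add_eq hB hBy
  set z := y / (B : ℝ) ^ 2 with hz
  have hz_one : 1 ≤ z := (one_le_div (by positivity)).mpr hBy
  have hyz : y = B ^ 2 * z := by rw [hz]; field_simp
  have hsqrt : √y = B * √z := by rw [hyz, Real.sqrt_mul (by positivity), Real.sqrt_sq hB_pos.le]
  have hA : (⌊z⌋₊ : ℝ) ≤ z := Nat.floor_le (by positivity)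
  have hA_ne : ⌊z⌋₊ ≠ 0 := (Nat.floor_pos.mpr hz_one).ne'
  have hA_pos : 0 < √(⌊z⌋₊ : ℝ) := Real.sqrt_pos.mpr (mod_cast Nat.pos_of_ne_zero hA_ne)
  have hsquares : |y * ∑ b ∈ Ioc 0 B, 1 / (b : ℝ) ^ 2 - (κ * y - B * z)| ≤ z := by
    calc _ = |y * (∑ b ∈ Ioc 0 B, 1 / (b : ℝ) ^ 2 - (-(1 / (B : ℝ)) + κ))| := by
          rw [hyz]; congr 1; field_simp; ring
      _ ≤ y * (1 / (B : ℝ) ^ 2) := by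
          rw [abs_mul, abs_of_nonneg hy]; gcongr; exact hκ B hB
      _ = z := mul_one_div _ _
  have hroots : |√y * ∑ a ∈ Ioc 0 ⌊z⌋₊, 1 / √(a : ℝ) - (2 * (B * √z) * √⌊z⌋₊ + ν * √y)| ≤
      2 * B := by
    calc _ = |√y * (∑ a ∈ Ioc 0 ⌊z⌋₊, 1 / √(a : ℝ) - (2 * √⌊z⌋₊ + ν))| := by
          rw [← hsqrt]; ring_nf
      _ ≤ √y * (1 / √⌊z⌋₊) := by
          rw [abs_mul, abs_of_nonneg y.sqrt_nonneg]; gcongr; exact hν _ hA_ne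
      _ ≤ 2 * B := by
          rw [mul_one_div, div_le_iff₀ hA_pos, hsqrt]
          nlinarith [sqrt_le_two_mul_sqrt_floor hz_one]
  have hfloor_squares := abs_sum_Ioc_floor_div_sq_sub_le hy B
  have hfloor_roots := abs_sum_Ioc_sqrt_floor_div_sub_le hy ⌊z⌋₊
  have hboundary := abs_hyperbola_boundary_le (zero_le_one.trans hz_one) hB_pos.le
  rw [abs_le] at hsquares hroots hfloor_squares hfloor_roots hboundary ⊢
  constructor <;> linarith

theorem exists_abs_squareDivisorSum_sub_le_cbrt :
    ∃ κ ν : ℝ, ∀ y : ℝ, 1 ≤ y →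
      |squareDivisorSum y - κ * y - ν * √y| ≤ 12 * y ^ (1 / 3 : ℝ) := by
  obtain ⟨κ, ν, hκν⟩ := exists_abs_squareDivisorSum_sub_le_add
  refine ⟨κ, ν, fun y hy ↦ ?_⟩
  set w := y ^ (1 / 3 : ℝ) with hw
  have hw_cube : w ^ 3 = y := by
    rw [hw, ← Real.rpow_natCast, ← Real.rpow_mul (by positivity)]; norm_num
  have hw_one : 1 ≤ w := Real.one_le_rpow hy (by norm_num)
  have hBw : (⌊w⌋₊ : ℝ) ≤ w := Nat.floor_le (by positivity)
  have hB_pos : 0 < ⌊w⌋₊ := Nat.floor_pos.mpr hw_one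
  have hwB : w ≤ 2 * ⌊w⌋₊ := by
    have : (1 : ℝ) ≤ ⌊w⌋₊ := mod_cast hB_pos
    linarith [Nat.lt_floor_add_one w]
  have hBy : (⌊w⌋₊ : ℝ) ^ 2 ≤ y := calc
    (⌊w⌋₊ : ℝ) ^ 2 ≤ w ^ 2 := by gcongr
    _ ≤ w ^ 3 := pow_le_pow_right₀ hw_one (by norm_num)
    _ = y := hw_cube
  have hdiv : y / (⌊w⌋₊ : ℝ) ^ 2 ≤ 4 * w := by
    rw [div_le_iff₀ (by positivity)]
    calc y = w * w ^ 2 := by rw [← hw_cube]; ring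
      _ ≤ w * (2 * ⌊w⌋₊) ^ 2 := by gcongr
      _ = 4 * w * (⌊w⌋₊ : ℝ) ^ 2 := by ring
  linarith [hκν y ⌊w⌋₊ hB_pos.ne' hBy]

theorem squareDivisorSum_eq_zero {y : ℝ} (hy : y < 1) : squareDivisorSum y = 0 := by
  simp [squareDivisorSum, Nat.floor_eq_zero.mpr hy]

theorem abs_sub_le_rpow_of_abs_sub_sub_le_cbrt {κ ν y s : ℝ} (hy : 1 ≤ y)
    (hs : |s - κ * y - ν * y ^ (1 / 2 : ℝ)| ≤ 12 * y ^ (1 / 3 : ℝ)) {η : ℝ} (hη : 1 / 2 ≤ η) :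
    |s - κ * y| ≤ (12 + |ν|) * y ^ η := by
  have hcbrt : y ^ (1 / 3 : ℝ) ≤ y ^ η :=
    Real.rpow_le_rpow_of_exponent_le hy (by linarith)
  have hsqrt : y ^ (1 / 2 : ℝ) ≤ y ^ η := Real.rpow_le_rpow_of_exponent_le hy hη
  calc |s - κ * y| = |(s - κ * y - ν * y ^ (1 / 2 : ℝ)) + ν * y ^ (1 / 2 : ℝ)| := by
        rw [sub_add_cancel]
    _ ≤ 12 * y ^ (1 / 3 : ℝ) + |ν| * y ^ (1 / 2 : ℝ) := by
        refine (abs_add_le _ _).trans (add_le_add hs ?_)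
        rw [abs_mul, abs_of_nonneg (Real.rpow_nonneg (by linarith) _)]
    _ ≤ 12 * y ^ η + |ν| * y ^ η := by gcongr
    _ = (12 + |ν|) * y ^ η := by ring

theorem abs_mul_add_mul_sqrt_le_rpow (κ ν : ℝ) {y θ : ℝ} (hy : 0 ≤ y) (hy_one : y ≤ 1)
    (hθ : 0 ≤ θ) (hθ_half : θ ≤ 1 / 2) :
    |κ * y + ν * y ^ (1 / 2 : ℝ)| ≤ (|κ| + |ν|) * y ^ θ := by
  have hlinear : y ≤ y ^ θ := Real.self_le_rpow_of_le_one hy hy_one (by linarith)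
  have hsqrt : y ^ (1 / 2 : ℝ) ≤ y ^ θ := Real.rpow_le_rpow_of_exponent_ge' hy hy_one hθ hθ_half
  calc |κ * y + ν * y ^ (1 / 2 : ℝ)| ≤ |κ| * y + |ν| * y ^ (1 / 2 : ℝ) := by
        refine (abs_add_le _ _).trans_eq ?_
        rw [abs_mul, abs_mul, abs_of_nonneg hy, abs_of_nonneg (Real.rpow_nonneg hy _)]
    _ ≤ |κ| * y ^ θ + |ν| * y ^ θ := by gcongr
    _ = (|κ| + |ν|) * y ^ θ := by ring

theorem exists_abs_squareDivisorSum_sub_le_rpow :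
    ∃ κ ν K : ℝ, ∀ y : ℝ, 0 ≤ y →
      (∀ θ ∈ Set.Icc (1 / 3 : ℝ) (1 / 2),
        |squareDivisorSum y - κ * y - ν * y ^ (1 / 2 : ℝ)| ≤ K * y ^ θ) ∧
      ∀ η ∈ Set.Icc (1 / 2 : ℝ) 1, |squareDivisorSum y - κ * y| ≤ K * y ^ η := by
  obtain ⟨κ, ν, hκν⟩ := exists_abs_squareDivisorSum_sub_le_cbrt
  refine ⟨κ, ν, 12 + |κ| + |ν|, fun y hy ↦ ?_⟩
  have hκ := abs_nonneg κ
  have hν := abs_nonneg ν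
  rcases le_or_gt 1 y with hy_one | hy_one
  · have hcbrt := hκν y hy_one
    rw [Real.sqrt_eq_rpow] at hcbrt
    constructor
    · intro θ hθ
      have hle := Real.rpow_le_rpow_of_exponent_le hy_one hθ.1
      exact hcbrt.trans (by gcongr; linarith)
    · intro η hη
      refine (abs_sub_le_rpow_of_abs_sub_sub_le_cbrt hy_one hcbrt hη.1).trans ?_
      gcongr
      linarith
  · rw [squareDivisorSum_eq_zero hy_one, zero_sub, abs_neg]
    constructor
    · intro θ hθ
      rw [← neg_add', abs_neg]
      refine (abs_mul_add_mul_sqrt_le_rpow κ ν hy hy_one.le (by linarith [hθ.1]) hθ.2).trans ?_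
      gcongr
      linarith
    · intro η hη
      have hle : y ≤ y ^ η := Real.self_le_rpow_of_le_one hy hy_one.le hη.2
      rw [abs_mul, abs_of_nonneg hy]
      gcongr
      linarith

end SquareDivisorSum

section Assembly

theorem abs_mul_sub_le_of_abs_sub_le {κ ν K p q y z y₂ z₂ a b a₀ b₀ : ℝ}
    (hy : 0 ≤ y) (hz : 0 ≤ z) (hp : |p - κ * y - ν * y₂| ≤ K * a)
    (hq : |q - κ * z - ν * z₂| ≤ K * b) (hp₀ : |p - κ * y| ≤ K * a₀) (hq₀ : |q - κ * z| ≤ K * b₀) :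
    |p * q - κ ^ 2 * (y * z) - κ * ν * (y * z₂ + y₂ * z)| ≤
      |κ| * K * (y * b + a * z) + K ^ 2 * (a₀ * b₀) := by
  have hexpand : p * q - κ ^ 2 * (y * z) - κ * ν * (y * z₂ + y₂ * z) =
      κ * y * (q - κ * z - ν * z₂) + κ * z * (p - κ * y - ν * y₂) +
        (p - κ * y) * (q - κ * z) := by ring
  rw [hexpand]
  calc _ ≤ |κ| * y * |q - κ * z - ν * z₂| + |κ| * z * |p - κ * y - ν * y₂| +
        |p - κ * y| * |q - κ * z| := by
        refine (abs_add_three _ _ _).trans_eq ?_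
        simp only [abs_mul, abs_of_nonneg hy, abs_of_nonneg hz]
    _ ≤ |κ| * y * (K * b) + |κ| * z * (K * a) + K * a₀ * (K * b₀) := by
        gcongr
        exact (abs_nonneg _).trans hp₀
    _ = |κ| * K * (y * b + a * z) + K ^ 2 * (a₀ * b₀) := by ring

theorem residual_mul_div_rpow (f : ℕ → ℝ) {x : ℝ} (hx : 0 < x) (α β : ℝ) (z : ℕ × ℕ) :
    residual f z.1 z.2 * ((x / z.1) ^ α * (x / z.2) ^ β) = x ^ (α + β) * residualTerm f α β z := by
  rw [residualTerm, Real.div_rpow hx.le (by positivity), Real.div_rpow hx.le (by positivity),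
    Real.rpow_add hx, Real.rpow_neg (by positivity), Real.rpow_neg (by positivity)]
  ring

theorem hasSum_residual_mul_squareDivisorSum (f : ℕ → ℝ) (x : ℝ) :
    HasSum (fun z : ℕ × ℕ ↦
        residual f z.1 z.2 * (squareDivisorSum (x / z.1) * squareDivisorSum (x / z.2)))
      (∑ m ∈ Ioc 0 ⌊x⌋₊, ∑ n ∈ Ioc 0 ⌊x⌋₊, f (m * n)) := by
  have squareDivisorSum_div (d : ℕ) :
      squareDivisorSum (x / d) = ∑ i ∈ Ioc 0 (⌊x⌋₊ / d), squareDivisorCount i := by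
    rw [squareDivisorSum, Nat.floor_div_natCast]
  have squareDivisorSum_div_eq_zero {d : ℕ} (hd : d ∉ Ioc 0 ⌊x⌋₊) :
      squareDivisorSum (x / d) = 0 := by
    have hdiv : ⌊x⌋₊ / d = 0 := by
      rw [Nat.div_eq_zero_iff]
      rw [mem_Ioc] at hd
      lia
    simp [squareDivisorSum_div, hdiv]
  rw [sum_Ioc_sum_Ioc_eq_sum_residual, ← sum_product (Ioc 0 ⌊x⌋₊) (Ioc 0 ⌊x⌋₊) fun z ↦
    residual f z.1 z.2 * ((∑ i ∈ Ioc 0 (⌊x⌋₊ / z.1), squareDivisorCount i) *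
      ∑ i ∈ Ioc 0 (⌊x⌋₊ / z.2), squareDivisorCount i)]
  simp only [← squareDivisorSum_div]
  refine hasSum_sum_of_ne_finset_zero fun z hz ↦ ?_
  rw [mem_product, not_and_or] at hz
  rcases hz with hz | hz <;> simp [squareDivisorSum_div_eq_zero hz]

theorem exists_abs_squareDivisorSum_mul_sub_le :
    ∃ κ ν K : ℝ, ∀ y z : ℝ, 0 ≤ y → 0 ≤ z → ∀ θ ∈ Set.Icc (1 / 3 : ℝ) (1 / 2),
      |squareDivisorSum y * squareDivisorSum z - κ ^ 2 * (y * z) -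
          κ * ν * (y * z ^ (1 / 2 : ℝ) + y ^ (1 / 2 : ℝ) * z)| ≤
        |κ| * K * (y * z ^ θ + y ^ θ * z) +
          K ^ 2 * (y ^ ((1 + θ) / 2) * z ^ ((1 + θ) / 2)) := by
  obtain ⟨κ, ν, K, hK⟩ := exists_abs_squareDivisorSum_sub_le_rpow
  refine ⟨κ, ν, K, fun y z hy hz θ hθ ↦ ?_⟩
  have hη : (1 + θ) / 2 ∈ Set.Icc (1 / 2 : ℝ) 1 := by
    constructor <;> linarith [hθ.1, hθ.2]
  exact abs_mul_sub_le_of_abs_sub_le hy hz ((hK y hy).1 θ hθ) ((hK z hz).1 θ hθ)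
    ((hK y hy).2 _ hη) ((hK z hz).2 _ hη)

theorem exists_abs_residual_mul_squareDivisorSum_sub_le (f : ℕ → ℝ) :
    ∃ κ ν K : ℝ, ∀ (x : ℝ) (z : ℕ × ℕ), 0 < x → ∀ θ ∈ Set.Icc (1 / 3 : ℝ) (1 / 2),
      |residual f z.1 z.2 * (squareDivisorSum (x / z.1) * squareDivisorSum (x / z.2)) -
          κ ^ 2 * residualTerm f 1 1 z * x ^ 2 -
          κ * ν * (residualTerm f 1 (1 / 2) z + residualTerm f (1 / 2) 1 z) * x ^ (3 / 2 : ℝ)| ≤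
        (|κ| * K * (|residualTerm f 1 θ z| + |residualTerm f θ 1 z|) +
          K ^ 2 * |residualTerm f ((1 + θ) / 2) ((1 + θ) / 2) z|) * x ^ (1 + θ) := by
  obtain ⟨κ, ν, K, hK⟩ := exists_abs_squareDivisorSum_mul_sub_le
  refine ⟨κ, ν, K, fun x z hx θ hθ ↦ ?_⟩
  have scale (α β : ℝ) := residual_mul_div_rpow f hx α β z
  have scale_abs (α β : ℝ) (hαβ : α + β = 1 + θ) :
      |residual f z.1 z.2| * ((x / z.1) ^ α * (x / z.2) ^ β) =
        |residualTerm f α β z| * x ^ (1 + θ) := by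
    rw [← abs_of_nonneg (show 0 ≤ (x / z.1) ^ α * (x / z.2) ^ β by positivity), ← abs_mul, scale,
      hαβ, abs_mul, abs_of_nonneg (by positivity), mul_comm]
  have scale_square := scale 1 1
  have scale_left := scale 1 (1 / 2)
  have scale_right := scale (1 / 2) 1
  have scale_abs_left := scale_abs 1 θ rfl
  have scale_abs_right := scale_abs θ 1 (add_comm θ 1)
  have scale_abs_both := scale_abs ((1 + θ) / 2) ((1 + θ) / 2) (add_halves _)
  rw [Real.rpow_one, Real.rpow_one, one_add_one_eq_two, Real.rpow_two] at scale_square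
  rw [Real.rpow_one, show (1 : ℝ) + 1 / 2 = 3 / 2 by norm_num] at scale_left
  rw [Real.rpow_one, show (1 / 2 : ℝ) + 1 = 3 / 2 by norm_num] at scale_right
  rw [Real.rpow_one] at scale_abs_left scale_abs_right
  calc _ = |residual f z.1 z.2 * (squareDivisorSum (x / z.1) * squareDivisorSum (x / z.2) -
          κ ^ 2 * (x / z.1 * (x / z.2)) -
          κ * ν * (x / z.1 * (x / z.2) ^ (1 / 2 : ℝ) + (x / z.1) ^ (1 / 2 : ℝ) * (x / z.2)))| := by
        congr 1
        linear_combination κ ^ 2 * scale_square + κ * ν * (scale_left + scale_right)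
    _ ≤ |residual f z.1 z.2| *
          (|κ| * K * (x / z.1 * (x / z.2) ^ θ + (x / z.1) ^ θ * (x / z.2)) +
            K ^ 2 * ((x / z.1) ^ ((1 + θ) / 2) * (x / z.2) ^ ((1 + θ) / 2))) := by
        rw [abs_mul]
        gcongr
        exact hK _ _ (by positivity) (by positivity) θ hθ
    _ = _ := by
        linear_combination |κ| * K * (scale_abs_left + scale_abs_right) + K ^ 2 * scale_abs_both

theorem exists_abs_sum_mul_sub_le {f : ℕ → ℝ}
    (hf : ∀ α β : ℝ, 1 / 3 < α → 1 / 3 < β → 1 < α + β → Summable (residualTerm f α β)) :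
    ∃ C₁ C₂ : ℝ, ∀ θ : ℝ, 1 / 3 < θ → θ ≤ 1 / 2 → ∃ E, ∀ x : ℝ, 0 < x →
      |∑ m ∈ Ioc 0 ⌊x⌋₊, ∑ n ∈ Ioc 0 ⌊x⌋₊, f (m * n) - C₁ * x ^ 2 - C₂ * x ^ (3 / 2 : ℝ)| ≤
        E * x ^ (1 + θ) := by
  obtain ⟨κ, ν, K, hK⟩ := exists_abs_residual_mul_squareDivisorSum_sub_le f
  have hsquare := (hf 1 1 (by norm_num) (by norm_num) (by norm_num)).hasSum.mul_left (κ ^ 2)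
  have hhalf := ((hf 1 (1 / 2) (by norm_num) (by norm_num) (by norm_num)).hasSum.add
    (hf (1 / 2) 1 (by norm_num) (by norm_num) (by norm_num)).hasSum).mul_left (κ * ν)
  refine ⟨κ ^ 2 * ∑' z, residualTerm f 1 1 z,
    κ * ν * (∑' z, residualTerm f 1 (1 / 2) z + ∑' z, residualTerm f (1 / 2) 1 z),
    fun θ hθ hθ_half ↦ ⟨|κ| * K * (∑' z, |residualTerm f 1 θ z| + ∑' z, |residualTerm f θ 1 z|) +
      K ^ 2 * ∑' z, |residualTerm f ((1 + θ) / 2) ((1 + θ) / 2) z|, fun x hx ↦ ?_⟩⟩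
  have herror := (((hf 1 θ (by linarith) hθ (by linarith)).abs.hasSum.add
      (hf θ 1 hθ (by linarith) (by linarith)).abs.hasSum).mul_left (|κ| * K)).add
    ((hf ((1 + θ) / 2) ((1 + θ) / 2) (by linarith) (by linarith)
      (by linarith)).abs.hasSum.mul_left (K ^ 2))
  exact (((hasSum_residual_mul_squareDivisorSum f x).sub (hsquare.mul_right _)).sub
    (hhalf.mul_right _)).norm_le_of_bounded (herror.mul_right _) fun z ↦
      hK x z hx θ ⟨hθ.le, hθ_half⟩

theorem isBigO_rpow_rpow_atTop {r s : ℝ} (hrs : r ≤ s) :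
    (fun x : ℝ ↦ x ^ r) =O[atTop] fun x : ℝ ↦ x ^ s := by
  refine .of_norm_eventuallyLE ((eventually_ge_atTop 1).mono fun x hx ↦ ?_)
  beta_reduce
  rw [Real.norm_of_nonneg (by positivity)]
  exact Real.rpow_le_rpow_of_exponent_le hx hrs

end Assembly

end ExponentialDivisor

theorem sum_exponential_divisor_mul_asymptotic_general (f : ℕ → ℝ) (A : ℝ) (N : ℕ)
    (h1 : f 1 = 1)
    (hmul : ∀ m n : ℕ, Nat.Coprime m n → f (m * n) = f m * f n)
    (hprime : ∀ p : ℕ, p.Prime → f p = 1)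
    (hprime_sq : ∀ p : ℕ, p.Prime → f (p ^ 2) = 2)
    (hbound : ∀ p k : ℕ, p.Prime → |f (p ^ k)| ≤ A * (k + 1) ^ N) :
    ∃ C₁ C₂ : ℝ, ∀ ε > (0 : ℝ),
      (fun x : ℝ =>
          (∑ m ∈ Finset.Icc 1 ⌊x⌋₊, ∑ n ∈ Finset.Icc 1 ⌊x⌋₊, f (m * n)) -
            C₁ * x ^ 2 - C₂ * x ^ ((3 : ℝ) / 2)) =O[atTop]
        fun x : ℝ => x ^ (4 / 3 + ε) := by
  obtain ⟨C₁, C₂, hC⟩ := ExponentialDivisor.exists_abs_sum_mul_sub_le fun _ _ hα hβ hαβ ↦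
    ExponentialDivisor.summable_residualTerm h1 hmul hprime hprime_sq hbound hα hβ hαβ
  refine ⟨C₁, C₂, fun ε hε ↦ ?_⟩
  obtain ⟨E, hE⟩ := hC (min (1 / 3 + ε) (1 / 2)) (lt_min (by linarith) (by norm_num))
    (min_le_right _ _)
  calc
    _ =O[atTop] fun x : ℝ ↦ x ^ (1 + min (1 / 3 + ε) (1 / 2)) := by
      refine .of_bound E ((eventually_gt_atTop 0).mono fun x hx ↦ ?_)
      rw [Real.norm_eq_abs, Real.norm_of_nonneg (by positivity)]
      simpa only [← Finset.Icc_add_one_left_eq_Ioc, zero_add] using hE x hx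
    _ =O[atTop] fun x : ℝ ↦ x ^ (4 / 3 + ε) :=
      ExponentialDivisor.isBigO_rpow_rpow_atTop (by linarith [min_le_left (1 / 3 + ε) (1 / 2)])

/-- If `τᵉ` is the multiplicative function with `τᵉ(p^a) = τ(a)` for all primes `p` and `a ≥ 1`
(and `τᵉ(1) = 1`), then `∑_{m,n ≤ x} τᵉ(mn) = C₁ x² + C₂ x^{3/2} + O(x^{10/7+ε})`. -/
theorem sum_exponential_divisor_mul_asymptotic (τe : ℕ → ℝ)
    (h1 : τe 1 = 1)
    (hmul : ∀ m n : ℕ, Nat.Coprime m n → τe (m * n) = τe m * τe n)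
    (hpp : ∀ p a : ℕ, p.Prime → 1 ≤ a → τe (p ^ a) = (Nat.divisors a).card) :
    ∃ C₁ C₂ : ℝ, ∀ ε > (0 : ℝ),
      (fun x : ℝ =>
          (∑ m ∈ Finset.Icc 1 ⌊x⌋₊, ∑ n ∈ Finset.Icc 1 ⌊x⌋₊, τe (m * n)) -
            C₁ * x ^ 2 - C₂ * x ^ ((3 : ℝ) / 2)) =O[atTop]
        fun x : ℝ => x ^ (10 / 7 + ε) := by
  have hprime (p : ℕ) (hp : p.Prime) : τe p = 1 := by simpa using hpp p 1 hp le_rfl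
  have hprime_sq (p : ℕ) (hp : p.Prime) : τe (p ^ 2) = 2 := by
    simpa [Nat.prime_two.divisors] using hpp p 2 hp one_le_two
  have hbound (p k : ℕ) (hp : p.Prime) : |τe (p ^ k)| ≤ 1 * (k + 1) ^ 1 := by
    rcases Nat.eq_zero_or_pos k with rfl | hk
    · simp [h1]
    · rw [hpp p k hp hk, Nat.abs_cast, one_mul, pow_one]
      exact_mod_cast (Nat.card_divisors_le_self k).trans k.le_succ
  obtain ⟨C₁, C₂, hC⟩ := sum_exponential_divisor_mul_asymptotic_general τe 1 1 h1 hmul hprime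
    hprime_sq hbound
  exact ⟨C₁, C₂, fun ε hε ↦ (hC ε hε).trans
    (ExponentialDivisor.isBigO_rpow_rpow_atTop (by linarith))⟩
end
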